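/- arXiv:2208.11286 — 2 statements merged into one kernel-verified Lean document; each statement's English description precedes it below -/
import Mathlib

section
/- There exists a universal constant C > 0 such that the following holds for all positive integers n and d ≥ 2. Given symmetric matrices A_1, ..., A_n ∈ ℝ^{d×d}, let X = ∑_{i=1}^n g_i A_i where g_1, ..., g_n are i.i.d. standard Gaussian random variables. Then 𝔼[‖X‖_op] ≤ C · ((log d)^{1/4} · σ(X) + (log d)^{1/2} · √(v(X) · σ(X))). -/
open MeasureTheory ProbabilityTheory

/-- Operator norm (largest singular value) of a real matrix, as the norm of the
induced linear map between Euclidean spaces. -/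
noncomputable def opNorm {m n : Type*} [Fintype m] [Fintype n] [DecidableEq n]
    (M : Matrix m n ℝ) : ℝ :=
  ‖LinearMap.toContinuousLinearMap (Matrix.toEuclideanLin M)‖

/-- Squared Frobenius norm of a real matrix. -/
noncomputable def frobNormSq {m n : Type*} [Fintype m] [Fintype n]
    (M : Matrix m n ℝ) : ℝ := ∑ i, ∑ j, (M i j) ^ 2

/-- Product of `n` standard Gaussian measures on `ℝ`. -/
noncomputable def gaussianPi (n : ℕ) : Measure (Fin n → ℝ) :=
  Measure.pi fun _ => gaussianReal 0 1

/-- `σ(X)` for `X = ∑ g i • A i`: square root of the operator norm of `∑ A i ^ 2`. -/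
noncomputable def sigmaX {n d : ℕ} (A : Fin n → Matrix (Fin d) (Fin d) ℝ) : ℝ :=
  Real.sqrt (opNorm (∑ i, A i * A i))

/-- Covariance matrix `Cov(X) = ∑ vec(A i) vec(A i)ᵀ`, indexed by pairs of entries. -/
noncomputable def covX {n d : ℕ} (A : Fin n → Matrix (Fin d) (Fin d) ℝ) :
    Matrix (Fin d × Fin d) (Fin d × Fin d) ℝ :=
  ∑ i, Matrix.of fun p q => A i p.1 p.2 * A i q.1 q.2

/-- `v(X)`: square root of the operator norm of `Cov(X)`. -/
noncomputable def vX {n d : ℕ} (A : Fin n → Matrix (Fin d) (Fin d) ℝ) : ℝ :=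
  Real.sqrt (opNorm (covX A))

/-!
The bound comes from the moments `𝔼 tr X^(2q)` with `q` of order `log d`. Gaussian integration by
parts gives `𝔼 tr X^(2q+4) = ∑ k ≤ 2q+2, ∑ i, 𝔼 tr (A i) X^k (A i) X^(2q+2-k)`. In an eigenbasis of
`X` each term is a sum of `(A i)_{ab}² x_a^k x_b^(2q+2-k)`, so a rearrangement inequality bounds the
four terms at the two ends by `k = 0` and all others by `k = 2`. Integrating by parts once more in
the factor `X²` of the latter produces, besides a term of size `σ⁴ 𝔼 tr X^(2q)`, at most `2q`
crossed terms `∑ i j, tr (A j) X (A i) X^k (A j) X^l (A i)`. The crossing is what brings in `v`: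
written through the entry covariances, such a term is at most `4σ²v² tr X^(2q)` by Cauchy–Schwarz.
Hence `u q = 𝔼 tr X^(2q)` satisfies
`u (q+2) ≤ 4σ² u (q+1) + (2q+3) (σ⁴ + 8qσ²v²) u q`,
and so `u p ≤ d L^p` for `L` of order `√p σ² + p σ v`.
-/

namespace MatrixConcentration

section Gaussian

variable {μ : ℝ} {v : NNReal}

lemma integrable_gaussianReal_iff (hv : v ≠ 0) {f : ℝ → ℝ} :
    Integrable f (gaussianReal μ v) ↔ Integrable (fun x ↦ gaussianPDFReal μ v x * f x) := by
  rw [gaussianReal_of_var_ne_zero μ hv, integrable_withDensity_iff_integrable_smul'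
    (measurable_gaussianPDF μ v) (ae_of_all _ fun _ ↦ gaussianPDF_lt_top)]
  simp only [toReal_gaussianPDF, smul_eq_mul]

lemma hasDerivAt_gaussianPDFReal (x : ℝ) :
    HasDerivAt (gaussianPDFReal μ v) (-((x - μ) / v * gaussianPDFReal μ v x)) x := by
  rw [gaussianPDFReal_def]
  have hexponent : HasDerivAt (fun y : ℝ ↦ -(y - μ) ^ 2 / (2 * v)) (-((x - μ) / v)) x := by
    refine ((((hasDerivAt_id x).sub_const μ).pow 2).neg.div_const (2 * (v : ℝ))).congr_deriv ?_
    simp only [id_eq, Nat.cast_ofNat, Nat.add_one_sub_one, pow_one, mul_one]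
    rw [← mul_neg, mul_div_mul_left _ _ two_ne_zero, neg_div]
  refine (hexponent.exp.const_mul (√(2 * Real.pi * v))⁻¹).congr_deriv ?_
  ring

lemma integral_sub_mul_gaussianReal (hv : v ≠ 0) {u u' : ℝ → ℝ}
    (hderiv : ∀ x, HasDerivAt u (u' x) x) (hu : Integrable u (gaussianReal μ v))
    (hu' : Integrable u' (gaussianReal μ v))
    (hxu : Integrable (fun x ↦ (x - μ) * u x) (gaussianReal μ v)) :
    ∫ x, (x - μ) * u x ∂gaussianReal μ v = v * ∫ x, u' x ∂gaussianReal μ v := by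
  have hv' : (v : ℝ) ≠ 0 := by exact_mod_cast hv
  rw [integrable_gaussianReal_iff hv] at hu hu' hxu
  have hparts := integral_mul_deriv_eq_deriv_mul_of_integrable (u := u)
    (v := gaussianPDFReal μ v) (fun x _ ↦ hderiv x) (fun x _ ↦ hasDerivAt_gaussianPDFReal x)
    ((hxu.const_mul (-(v : ℝ)⁻¹)).congr (ae_of_all _ fun x ↦ by simp only [Pi.mul_apply]; ring))
    (hu'.congr (ae_of_all _ fun x ↦ mul_comm _ _)) (hu.congr (ae_of_all _ fun x ↦ mul_comm _ _))
  simp only [integral_gaussianReal_eq_integral_smul hv, smul_eq_mul]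
  calc ∫ x, gaussianPDFReal μ v x * ((x - μ) * u x)
      = -v * ∫ x, u x * -((x - μ) / v * gaussianPDFReal μ v x) := by
        rw [← integral_const_mul]
        congr with x
        field_simp
    _ = v * ∫ x, gaussianPDFReal μ v x * u' x := by
        rw [hparts, neg_mul_neg]
        simp only [mul_comm]

lemma integrable_pow_gaussianReal (m : ℕ) : Integrable (fun x ↦ x ^ m) (gaussianReal μ v) := by
  refine (memLp_id_gaussianReal (μ := μ) (v := v) m).integrable_norm_pow'.mono' (by fun_prop) ?_
  exact ae_of_all _ fun x ↦ by simp

lemma integral_pow_succ_gaussianReal (m : ℕ) :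
    ∫ x, x ^ (m + 1) ∂gaussianReal 0 v = v * (m * ∫ x, x ^ (m - 1) ∂gaussianReal 0 v) := by
  rcases eq_or_ne v 0 with rfl | hv
  · simp
  simpa [pow_succ', integral_const_mul] using
    integral_sub_mul_gaussianReal (μ := 0) hv (hasDerivAt_pow m) (integrable_pow_gaussianReal m)
      ((integrable_pow_gaussianReal (m - 1)).const_mul _)
      (by simpa [← pow_succ'] using integrable_pow_gaussianReal (μ := 0) (v := v) (m + 1))

end Gaussian

section GaussianExpectation

open MvPolynomial

variable {ι : Type*} [Fintype ι]

/-- The standard Gaussian measure on `ι → ℝ`; `gaussianPi n` is the case `ι = Fin n`. -/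
noncomputable abbrev stdGaussianPi (ι : Type*) [Fintype ι] : Measure (ι → ℝ) :=
  Measure.pi fun _ ↦ gaussianReal 0 1

lemma integrable_eval_stdGaussianPi (p : MvPolynomial ι ℝ) :
    Integrable (fun g ↦ eval g p) (stdGaussianPi ι) := by
  induction p using MvPolynomial.induction_on' with
  | monomial s a =>
    simp only [eval_monomial, Finsupp.prod_fintype _ _ fun _ ↦ pow_zero _]
    exact (Integrable.fintype_prod fun i ↦ integrable_pow_gaussianReal (s i)).const_mul a
  | add p q hp hq =>
    simp only [map_add]
    exact hp.add hq

/-- Gaussian expectation as a linear functional on polynomials. Staying inside the polynomial ring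
makes integrability automatic and turns Gaussian integration by parts into an algebraic rule. -/
noncomputable def gaussianExpect : MvPolynomial ι ℝ →ₗ[ℝ] ℝ where
  toFun p := ∫ g, eval g p ∂stdGaussianPi ι
  map_add' p q := by
    simp only [map_add]
    exact integral_add (integrable_eval_stdGaussianPi p) (integrable_eval_stdGaussianPi q)
  map_smul' c p := by
    simp only [smul_eval, RingHom.id_apply, smul_eq_mul, integral_const_mul]

lemma gaussianExpect_apply (p : MvPolynomial ι ℝ) :
    gaussianExpect p = ∫ g, eval g p ∂stdGaussianPi ι := rfl

lemma gaussianExpect_monomial (s : ι →₀ ℕ) (a : ℝ) :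
    gaussianExpect (monomial s a) = a * ∏ i, ∫ x, x ^ s i ∂gaussianReal 0 1 := by
  simp only [gaussianExpect_apply, eval_monomial, Finsupp.prod_fintype _ _ fun _ ↦ pow_zero _,
    integral_const_mul]
  rw [integral_fintype_prod_eq_prod fun i (x : ℝ) ↦ x ^ s i]

lemma gaussianExpect_X_mul (i : ι) (p : MvPolynomial ι ℝ) :
    gaussianExpect (X i * p) = gaussianExpect (pderiv i p) := by
  classical
  induction p using MvPolynomial.induction_on' with
  | monomial s a =>
    have hprod (f : ℕ → ℝ) (t : ι →₀ ℕ) (ht : ∀ j, j ≠ i → t j = s j) :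
        ∏ j, f (t j) = f (t i) * ∏ j ∈ Finset.univ.erase i, f (s j) := by
      rw [← Finset.mul_prod_erase _ _ (Finset.mem_univ i)]
      exact congrArg _ (Finset.prod_congr rfl fun j hj ↦ by rw [ht j (Finset.ne_of_mem_erase hj)])
    let moment (k : ℕ) : ℝ := ∫ x, x ^ k ∂gaussianReal 0 1
    have hmoment : moment (s i + 1) = s i * moment (s i - 1) := by
      simpa using integral_pow_succ_gaussianReal (v := 1) (s i)
    rw [pderiv_monomial, X, monomial_mul, gaussianExpect_monomial, gaussianExpect_monomial,
      hprod moment (Finsupp.single i 1 + s) fun j hj ↦ by simp [hj.symm],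
      hprod moment (s - Finsupp.single i 1) fun j hj ↦ by simp [hj.symm]]
    simp only [Finsupp.add_apply, Finsupp.single_eq_same, Finsupp.tsub_apply, add_comm 1 (s i),
      hmoment]
    ring
  | add p q hp hq => simp only [mul_add, map_add, hp, hq]

end GaussianExpectation

section GaussianTrace

open MvPolynomial Matrix

variable {ι κ : Type*}

lemma map_pow_of_leibniz {R S : Type*} [Semiring R] [Ring S] [Module R S] (D : S →ₗ[R] S)
    (hD : ∀ x y, D (x * y) = D x * y + x * D y) (x : S) (m : ℕ) :
    D (x ^ m) = ∑ k ∈ Finset.range m, x ^ k * D x * x ^ (m - 1 - k) := by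
  induction m with
  | zero => simpa using hD 1 1
  | succ m ih =>
    rw [pow_succ', hD, ih, Finset.mul_sum, Finset.sum_range_succ']
    simp only [pow_succ', mul_assoc, pow_zero, one_mul, add_tsub_cancel_right, tsub_zero,
      Nat.sub_add_eq, Nat.sub_right_comm, add_comm]

lemma eval_mapMatrix_C [Fintype κ] [DecidableEq κ] (g : ι → ℝ) (B : Matrix κ κ ℝ) :
    (eval g).mapMatrix (C.mapMatrix B) = B := by
  ext a b
  simp only [RingHom.mapMatrix_apply, map_apply, eval_C]

lemma eval_mapMatrix_smul [Fintype κ] [DecidableEq κ] (g : ι → ℝ) (c : ℝ)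
    (M : Matrix κ κ (MvPolynomial ι ℝ)) :
    (eval g).mapMatrix (c • M) = c • (eval g).mapMatrix M := by
  ext a b
  simp only [RingHom.mapMatrix_apply, map_apply, Matrix.smul_apply, smul_eval, smul_eq_mul]

/-- The formal matrix series `∑ i, g i • A i`, with the Gaussian variables `g i` replaced by the
indeterminates `X i`. -/
noncomputable def gaussianSeries [Fintype ι] [Fintype κ] [DecidableEq κ] (A : ι → Matrix κ κ ℝ) :
    Matrix κ κ (MvPolynomial ι ℝ) :=
  ∑ i, (X i : MvPolynomial ι ℝ) • C.mapMatrix (A i)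

lemma eval_mapMatrix_gaussianSeries [Fintype ι] [Fintype κ] [DecidableEq κ] (g : ι → ℝ)
    (A : ι → Matrix κ κ ℝ) : (eval g).mapMatrix (gaussianSeries A) = ∑ i, g i • A i := by
  ext a b
  simp [gaussianSeries, Matrix.sum_apply]

/-- The entrywise partial derivative of a matrix of polynomials. -/
noncomputable def matrixPderiv (i : ι) :
    Matrix κ κ (MvPolynomial ι ℝ) →ₗ[ℝ] Matrix κ κ (MvPolynomial ι ℝ) :=
  (pderiv i).toLinearMap.mapMatrix

lemma matrixPderiv_apply (i : ι) (M : Matrix κ κ (MvPolynomial ι ℝ)) (a b : κ) :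
    matrixPderiv i M a b = pderiv i (M a b) := rfl

variable [Fintype κ]

lemma matrixPderiv_mul (i : ι) (M N : Matrix κ κ (MvPolynomial ι ℝ)) :
    matrixPderiv i (M * N) = matrixPderiv i M * N + M * matrixPderiv i N := by
  ext1 a b
  simp only [matrixPderiv_apply, mul_apply, Matrix.add_apply, map_sum, Derivation.leibniz,
    smul_eq_mul, Finset.sum_add_distrib, add_comm, mul_comm (N _ _)]

lemma trace_matrixPderiv (i : ι) (M : Matrix κ κ (MvPolynomial ι ℝ)) :
    (matrixPderiv i M).trace = pderiv i M.trace := by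
  simp only [trace, diag_apply, matrixPderiv_apply, map_sum]

/-- The expected trace `𝔼 tr M` of a matrix of polynomials in Gaussian variables. -/
noncomputable def gaussianTrace [Fintype ι] : Matrix κ κ (MvPolynomial ι ℝ) →ₗ[ℝ] ℝ :=
  gaussianExpect ∘ₗ traceLinearMap κ ℝ (MvPolynomial ι ℝ)

lemma gaussianTrace_apply [Fintype ι] (M : Matrix κ κ (MvPolynomial ι ℝ)) :
    gaussianTrace M = gaussianExpect M.trace := rfl

lemma gaussianTrace_mul_comm [Fintype ι] (M N : Matrix κ κ (MvPolynomial ι ℝ)) :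
    gaussianTrace (M * N) = gaussianTrace (N * M) := by
  rw [gaussianTrace_apply, trace_mul_comm, gaussianTrace_apply]

variable [DecidableEq κ]

lemma matrixPderiv_C (i : ι) (B : Matrix κ κ ℝ) : matrixPderiv i (C.mapMatrix B) = 0 := by
  ext1 a b
  simp only [matrixPderiv_apply, RingHom.mapMatrix_apply, map_apply, pderiv_C, Matrix.zero_apply]

variable [Fintype ι]

lemma gaussianTrace_eq_integral (M : Matrix κ κ (MvPolynomial ι ℝ)) :
    gaussianTrace M = ∫ g, ((eval g).mapMatrix M).trace ∂stdGaussianPi ι := by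
  simp only [gaussianTrace_apply, gaussianExpect_apply, ← AddMonoidHom.map_trace,
    RingHom.mapMatrix_apply]

lemma gaussianTrace_mono {M N : Matrix κ κ (MvPolynomial ι ℝ)}
    (h : ∀ g, ((eval g).mapMatrix M).trace ≤ ((eval g).mapMatrix N).trace) :
    gaussianTrace M ≤ gaussianTrace N := by
  simp only [RingHom.mapMatrix_apply, ← AddMonoidHom.map_trace] at h
  exact integral_mono (integrable_eval_stdGaussianPi _) (integrable_eval_stdGaussianPi _) h

lemma gaussianTrace_gaussianSeries_mul (A : ι → Matrix κ κ ℝ)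
    (M : Matrix κ κ (MvPolynomial ι ℝ)) :
    gaussianTrace (gaussianSeries A * M) =
      gaussianTrace (∑ i, C.mapMatrix (A i) * matrixPderiv i M) := by
  rw [gaussianSeries, Finset.sum_mul, map_sum, map_sum]
  refine Finset.sum_congr rfl fun i _ ↦ ?_
  rw [smul_mul, gaussianTrace_apply, trace_smul, smul_eq_mul, gaussianExpect_X_mul,
    ← trace_matrixPderiv, matrixPderiv_mul, matrixPderiv_C, zero_mul, zero_add,
    gaussianTrace_apply]

lemma matrixPderiv_gaussianSeries (i : ι) (A : ι → Matrix κ κ ℝ) :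
    matrixPderiv i (gaussianSeries A) = C.mapMatrix (A i) := by
  classical
  ext1 a b
  simp [matrixPderiv_apply, gaussianSeries, Matrix.sum_apply, pderiv_X, Pi.single_apply]

lemma matrixPderiv_gaussianSeries_pow (i : ι) (A : ι → Matrix κ κ ℝ) (m : ℕ) :
    matrixPderiv i (gaussianSeries A ^ m) = ∑ k ∈ Finset.range m,
      gaussianSeries A ^ k * C.mapMatrix (A i) * gaussianSeries A ^ (m - 1 - k) := by
  rw [map_pow_of_leibniz _ (matrixPderiv_mul i), matrixPderiv_gaussianSeries]

lemma gaussianTrace_gaussianSeries_pow_add_two (A : ι → Matrix κ κ ℝ) (m : ℕ) :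
    gaussianTrace (gaussianSeries A ^ (m + 2)) =
      gaussianTrace (∑ i, ∑ k ∈ Finset.range (m + 1), C.mapMatrix (A i) * gaussianSeries A ^ k *
        C.mapMatrix (A i) * gaussianSeries A ^ (m - k)) := by
  rw [pow_succ', gaussianTrace_gaussianSeries_mul]
  simp only [matrixPderiv_gaussianSeries_pow, Finset.mul_sum, mul_assoc, add_tsub_cancel_right]

lemma gaussianTrace_conj_gaussianSeries_sq (A : ι → Matrix κ κ ℝ) (m : ℕ) :
    gaussianTrace (∑ i, C.mapMatrix (A i) * gaussianSeries A ^ 2 *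
        C.mapMatrix (A i) * gaussianSeries A ^ m) =
      gaussianTrace (∑ i, ∑ j, (C.mapMatrix (A j) * C.mapMatrix (A j) *
          (C.mapMatrix (A i) * gaussianSeries A ^ m * C.mapMatrix (A i)) +
        ∑ k ∈ Finset.range m, C.mapMatrix (A j) * gaussianSeries A * C.mapMatrix (A i) *
          gaussianSeries A ^ k * C.mapMatrix (A j) * gaussianSeries A ^ (m - 1 - k) *
          C.mapMatrix (A i))) := by
  rw [map_sum, map_sum]
  refine Finset.sum_congr rfl fun i _ ↦ ?_
  rw [sq, mul_assoc, mul_assoc, gaussianTrace_mul_comm]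
  simp only [mul_assoc]
  rw [gaussianTrace_gaussianSeries_mul]
  simp only [matrixPderiv_mul, matrixPderiv_C, matrixPderiv_gaussianSeries,
    matrixPderiv_gaussianSeries_pow, mul_zero, zero_mul, add_zero, zero_add, mul_add,
    Finset.mul_sum, Finset.sum_mul, mul_assoc]

end GaussianTrace

section TraceInequalities

open Matrix Unitary
open scoped MatrixOrder

variable {κ : Type*} [Fintype κ]

lemma trace_mul_nonneg {M P : Matrix κ κ ℝ} (hM : 0 ≤ M) (hP : 0 ≤ P) : 0 ≤ (M * P).trace := by
  classical
  obtain ⟨R, rfl⟩ := CStarAlgebra.nonneg_iff_eq_star_mul_self.mp hP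
  rw [← mul_assoc, trace_mul_comm, ← mul_assoc]
  exact (hM.posSemidef.mul_mul_conjTranspose_same R).trace_nonneg

variable [DecidableEq κ]

lemma trace_mul_le_of_le_smul_one {M P : Matrix κ κ ℝ} {s : ℝ} (hM : M ≤ s • 1) (hP : 0 ≤ P) :
    (M * P).trace ≤ s * P.trace := by
  have := trace_mul_nonneg (sub_nonneg.mpr hM) hP
  rwa [sub_mul, smul_mul, one_mul, trace_sub, trace_smul, smul_eq_mul, sub_nonneg] at this

lemma trace_mul_pow_mul_pow_nonneg {A X : Matrix κ κ ℝ} (hA : A.IsHermitian) (hX : X.IsHermitian)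
    {k m : ℕ} (hk : Even k) (hm : Even m) : 0 ≤ (A * X ^ k * A * X ^ m).trace := by
  obtain ⟨⟨a, rfl⟩, ⟨b, rfl⟩⟩ := And.intro hk hm
  have hcycle : (A * X ^ (a + a) * A * X ^ (b + b)).trace =
      ((X ^ a * A * X ^ b)ᴴ * (X ^ a * A * X ^ b)).trace := by
    rw [pow_add X b, ← mul_assoc, trace_mul_comm]
    simp only [conjTranspose_mul, conjTranspose_pow, hA.eq, hX.eq, pow_add, mul_assoc]
  rw [hcycle]
  exact (posSemidef_conjTranspose_mul_self _).trace_nonneg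

lemma exists_starAlgEquiv_eq_diagonal {X : Matrix κ κ ℝ} (hX : X.IsHermitian) :
    ∃ φ : Matrix κ κ ℝ ≃⋆ₐ[ℝ] Matrix κ κ ℝ,
      (∀ M, (φ M).trace = M.trace) ∧ ∃ x, φ X = diagonal x := by
  refine ⟨conjStarAlgAut ℝ _ (star hX.eigenvectorUnitary), fun M ↦ ?_, _,
    hX.conjStarAlgAut_star_eigenvectorUnitary⟩
  rw [conjStarAlgAut_apply, trace_mul_comm, ← mul_assoc, coe_star_mul_self, one_mul]

lemma trace_mul_diagonal_mul_diagonal {A : Matrix κ κ ℝ} (hA : A.IsHermitian) (x y : κ → ℝ) :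
    (A * diagonal x * A * diagonal y).trace = ∑ a, ∑ b, A a b ^ 2 * (x b * y a) := by
  simp only [trace, diag_apply, mul_diagonal, mul_apply (M := A * diagonal x), Finset.sum_mul]
  refine Finset.sum_congr rfl fun a _ ↦ Finset.sum_congr rfl fun b _ ↦ ?_
  rw [← hA.apply b a, star_trivial]
  ring

lemma pow_mul_pow_add_pow_mul_pow_le (x y : ℝ) {a b c : ℕ} (hab : Even (a + b)) (hc : Even c) :
    x ^ (a + c) * y ^ (b + c) + y ^ (a + c) * x ^ (b + c) ≤
      x ^ c * y ^ (a + b + c) + y ^ c * x ^ (a + b + c) := by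
  have hmono : 0 ≤ (|x| ^ a - |y| ^ a) * (|x| ^ b - |y| ^ b) := by
    rcases le_total |x| |y| with h | h
    · exact mul_nonneg_of_nonpos_of_nonpos (sub_nonpos.mpr (pow_le_pow_left₀ (abs_nonneg x) h a))
        (sub_nonpos.mpr (pow_le_pow_left₀ (abs_nonneg x) h b))
    · exact mul_nonneg (sub_nonneg.mpr (pow_le_pow_left₀ (abs_nonneg y) h a))
        (sub_nonneg.mpr (pow_le_pow_left₀ (abs_nonneg y) h b))
  have habs : x ^ a * y ^ b + y ^ a * x ^ b ≤ x ^ (a + b) + y ^ (a + b) := by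
    have hxy := (le_abs_self (x ^ a * y ^ b)).trans_eq (by rw [abs_mul, abs_pow, abs_pow])
    have hyx := (le_abs_self (y ^ a * x ^ b)).trans_eq (by rw [abs_mul, abs_pow, abs_pow])
    rw [← hab.pow_abs x, ← hab.pow_abs y, pow_add, pow_add]
    linarith
  have := mul_le_mul_of_nonneg_left habs (hc.pow_nonneg (x * y))
  calc _ = (x * y) ^ c * (x ^ a * y ^ b + y ^ a * x ^ b) := by ring
    _ ≤ (x * y) ^ c * (x ^ (a + b) + y ^ (a + b)) := this
    _ = _ := by ring

lemma trace_mul_pow_mul_pow_le {A X : Matrix κ κ ℝ} (hA : A.IsHermitian) (hX : X.IsHermitian)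
    {a b c : ℕ} (hab : Even (a + b)) (hc : Even c) :
    (A * X ^ (a + c) * A * X ^ (b + c)).trace ≤ (A * X ^ c * A * X ^ (a + b + c)).trace := by
  have hcomm (k m : ℕ) : (A * X ^ k * A * X ^ m).trace = (A * X ^ m * A * X ^ k).trace := by
    rw [mul_assoc, trace_mul_comm, ← mul_assoc]
  obtain ⟨φ, hφtrace, x, hφX⟩ := exists_starAlgEquiv_eq_diagonal hX
  have hdiag (k m : ℕ) :
      (A * X ^ k * A * X ^ m).trace = ∑ a, ∑ b, φ A a b ^ 2 * (x b ^ k * x a ^ m) := by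
    rw [← hφtrace]
    simp only [map_mul, map_pow, hφX, diagonal_pow,
      trace_mul_diagonal_mul_diagonal (hA.isSelfAdjoint.map φ).isHermitian, Pi.pow_apply]
  have hdouble : 2 * (A * X ^ (a + c) * A * X ^ (b + c)).trace ≤
      2 * (A * X ^ c * A * X ^ (a + b + c)).trace := by
    rw [two_mul, two_mul]
    nth_rw 2 [hcomm]
    nth_rw 4 [hcomm]
    simp only [hdiag, ← Finset.sum_add_distrib, ← mul_add]
    refine Finset.sum_le_sum fun i _ ↦ Finset.sum_le_sum fun j _ ↦
      mul_le_mul_of_nonneg_left ?_ (sq_nonneg _)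
    linarith [pow_mul_pow_add_pow_mul_pow_le (x i) (x j) hab hc]
  linarith

lemma sum_trace_mul_pow_mul_pow_le {A X : Matrix κ κ ℝ} (hA : A.IsHermitian)
    (hX : X.IsHermitian) (q : ℕ) :
    ∑ k ∈ Finset.range (2 * q + 3), (A * X ^ k * A * X ^ (2 * q + 2 - k)).trace ≤
      4 * (A * A * X ^ (2 * q + 2)).trace + (2 * q + 3) * (A * X ^ 2 * A * X ^ (2 * q)).trace := by
  have hnonneg₀ : 0 ≤ (A * A * X ^ (2 * q + 2)).trace := by
    simpa using trace_mul_pow_mul_pow_nonneg (k := 0) hA hX (by simp) (by simp [parity_simps])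
  have hnonneg₂ : 0 ≤ (A * X ^ 2 * A * X ^ (2 * q)).trace :=
    trace_mul_pow_mul_pow_nonneg hA hX even_two (even_two_mul q)
  let ends : Finset ℕ := {0, 1, 2 * q + 1, 2 * q + 2}
  have hterm (k : ℕ) (hk : k ∈ Finset.range (2 * q + 3)) :
      (A * X ^ k * A * X ^ (2 * q + 2 - k)).trace ≤
        (if k ∈ ends then (A * A * X ^ (2 * q + 2)).trace else 0) +
          (A * X ^ 2 * A * X ^ (2 * q)).trace := by
    rw [Finset.mem_range] at hk
    split_ifs with hend
    · obtain ⟨b, hb⟩ := Nat.exists_eq_add_of_le (Nat.le_of_lt_succ hk)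
      have := trace_mul_pow_mul_pow_le (a := k) (b := b) (c := 0) hA hX
        ⟨q + 1, by omega⟩ Even.zero
      simp only [add_zero, pow_zero, mul_one, ← hb] at this
      rw [hb, add_tsub_cancel_left, ← hb]
      linarith
    · simp only [ends, Finset.mem_insert, Finset.mem_singleton, not_or] at hend
      obtain ⟨a, rfl⟩ := Nat.exists_eq_add_of_le' (show 2 ≤ k by omega)
      obtain ⟨b, hb⟩ := Nat.exists_eq_add_of_le (show a ≤ 2 * q - 2 by omega)
      have := trace_mul_pow_mul_pow_le (a := a) (b := b) (c := 2) hA hX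
        ⟨q - 1, by omega⟩ even_two
      rw [show 2 * q + 2 - (a + 2) = b + 2 by omega, show 2 * q = a + b + 2 by omega]
      linarith
  calc _ ≤ _ := Finset.sum_le_sum hterm
    _ = ((Finset.range (2 * q + 3) ∩ ends).card : ℝ) * (A * A * X ^ (2 * q + 2)).trace +
          (2 * q + 3) * (A * X ^ 2 * A * X ^ (2 * q)).trace := by
      rw [Finset.sum_add_distrib, Finset.sum_ite_mem, Finset.sum_const, Finset.sum_const,
        Finset.card_range, nsmul_eq_mul, nsmul_eq_mul]
      push_cast
      rfl
    _ ≤ _ := by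
      gcongr
      exact_mod_cast (Finset.card_le_card Finset.inter_subset_right).trans Finset.card_le_four

variable {ι : Type*} [Fintype ι] {A : ι → Matrix κ κ ℝ} {s : ℝ}

lemma trace_sum_conj_le (hs : ∑ i, A i * A i ≤ s • 1) {P : Matrix κ κ ℝ} (hP : 0 ≤ P) :
    (∑ i, A i * P * A i).trace ≤ s * P.trace := by
  have hcycle : (∑ i, A i * P * A i).trace = ((∑ i, A i * A i) * P).trace := by
    rw [Finset.sum_mul, trace_sum, trace_sum]
    exact Finset.sum_congr rfl fun i _ ↦ trace_mul_cycle _ _ _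
  exact hcycle.trans_le (trace_mul_le_of_le_smul_one hs hP)

lemma trace_sum_sq_mul_conj_le (hA : ∀ i, (A i).IsHermitian) (hs : ∑ i, A i * A i ≤ s • 1)
    (hs₀ : 0 ≤ s) {P : Matrix κ κ ℝ} (hP : 0 ≤ P) :
    (∑ i, ∑ j, A j * A j * (A i * P * A i)).trace ≤ s ^ 2 * P.trace := by
  have hconj : 0 ≤ ∑ i, A i * P * A i := Finset.sum_nonneg fun i _ ↦ by
    simpa only [(hA i).eq] using (hP.posSemidef.mul_mul_conjTranspose_same (A i)).nonneg
  calc (∑ i, ∑ j, A j * A j * (A i * P * A i)).trace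
      = ((∑ j, A j * A j) * ∑ i, A i * P * A i).trace := by
        simp only [← Finset.sum_mul, ← Finset.mul_sum]
    _ ≤ s * (∑ i, A i * P * A i).trace := trace_mul_le_of_le_smul_one hs hconj
    _ ≤ s * (s * P.trace) := by gcongr; exact trace_sum_conj_le hs hP
    _ = s ^ 2 * P.trace := by ring

end TraceInequalities

section EntryCovariance

open Matrix
open scoped MatrixOrder

variable {ι κ : Type*} [Fintype ι] {A : ι → Matrix κ κ ℝ} {s w : ℝ}

/-- The covariance `Cov(X)` of the entries of `X = ∑ i, g i • A i`, as a function of four indices: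
`entryCov A a b c e` is the covariance of the entries `(a, b)` and `(c, e)`. -/
def entryCov (A : ι → Matrix κ κ ℝ) (a b c e : κ) : ℝ :=
  ∑ i, A i a b * A i c e

lemma entryCov_comm (a b c e : κ) : entryCov A a b c e = entryCov A c e a b := by
  simp only [entryCov, mul_comm]

lemma entryCov_swap_left (hA : ∀ i, (A i).IsHermitian) (a b c e : κ) :
    entryCov A a b c e = entryCov A b a c e :=
  Finset.sum_congr rfl fun i _ ↦ by rw [← (hA i).apply a b, star_trivial]

variable [Fintype κ]

-- Testing `Cov(X)` as a quadratic form shows that `hw` says `‖Cov(X)‖ ≤ w`, i.e. `v(X)² ≤ w`.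
lemma sum_entryCov_sq_le (hw : ∀ c : ι → ℝ, frobNormSq (∑ i, c i • A i) ≤ w * ∑ i, c i ^ 2)
    (a b : κ) : ∑ c, ∑ e, entryCov A a b c e ^ 2 ≤ w * ∑ i, A i a b ^ 2 := by
  simpa only [entryCov, frobNormSq, Matrix.sum_apply, Matrix.smul_apply, smul_eq_mul] using
    hw fun i ↦ A i a b

lemma sum_rotate (g : κ → κ → κ → κ → ℝ) :
    ∑ a, ∑ b, ∑ c, ∑ e, g b c e a = ∑ a, ∑ b, ∑ c, ∑ e, g a b c e := by
  rw [Finset.sum_comm]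
  refine Finset.sum_congr rfl fun b _ ↦ ?_
  rw [Finset.sum_comm]
  exact Finset.sum_congr rfl fun c _ ↦ Finset.sum_comm

lemma trace_mul_mul_mul (M N P Q : Matrix κ κ ℝ) :
    (M * N * P * Q).trace = ∑ a, ∑ b, ∑ c, ∑ e, M a b * (N b c * (P c e * Q e a)) := by
  simp only [trace, diag_apply, mul_assoc, mul_apply, Finset.mul_sum]

lemma frobNormSq_eq_trace (M : Matrix κ κ ℝ) : frobNormSq M = (star M * M).trace := by
  simp only [frobNormSq, trace, diag_apply, mul_apply, star_apply, star_trivial, ← sq]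
  exact Finset.sum_comm

variable [DecidableEq κ]

lemma sum_apply_sq_le (hA : ∀ i, (A i).IsHermitian) (hs : ∑ i, A i * A i ≤ s • 1) (a : κ) :
    ∑ b, ∑ i, A i a b ^ 2 ≤ s := by
  have hsq (i : ι) : (A i * A i) a a = ∑ b, A i a b ^ 2 :=
    (mul_apply).trans <| Finset.sum_congr rfl fun b _ ↦ by
      rw [← (hA i).apply b a, star_trivial, sq]
  have hdiag := (Matrix.le_iff.mp hs).diag_nonneg (i := a)
  rw [Matrix.sub_apply, Matrix.smul_apply, one_apply_eq, smul_eq_mul, mul_one, Matrix.sum_apply,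
    sub_nonneg] at hdiag
  rw [Finset.sum_comm]
  simpa only [hsq] using hdiag

lemma sum_mul_entryCov_sq_le (hA : ∀ i, (A i).IsHermitian) (hs : ∑ i, A i * A i ≤ s • 1)
    (hw₀ : 0 ≤ w) (hw : ∀ c : ι → ℝ, frobNormSq (∑ i, c i • A i) ≤ w * ∑ i, c i ^ 2)
    {f : κ → ℝ} (hf : ∀ a, 0 ≤ f a) :
    ∑ a, ∑ b, ∑ c, ∑ e, f a * entryCov A a b c e ^ 2 ≤ s * w * ∑ a, f a := by
  simp only [← Finset.mul_sum]
  calc ∑ a, f a * ∑ b, ∑ c, ∑ e, entryCov A a b c e ^ 2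
      ≤ ∑ a, f a * (s * w) := by
        gcongr with a
        · exact hf a
        calc _ ≤ ∑ b, w * ∑ i, A i a b ^ 2 :=
              Finset.sum_le_sum fun b _ ↦ sum_entryCov_sq_le hw a b
          _ ≤ w * s := by
              rw [← Finset.mul_sum]
              gcongr
              exact sum_apply_sq_le hA hs a
          _ = s * w := mul_comm w s
    _ = s * w * ∑ a, f a := by rw [← Finset.sum_mul, mul_comm]

lemma sum_add_mul_entryCov_sq_le (hA : ∀ i, (A i).IsHermitian) (hs : ∑ i, A i * A i ≤ s • 1)
    (hw₀ : 0 ≤ w) (hw : ∀ c : ι → ℝ, frobNormSq (∑ i, c i • A i) ≤ w * ∑ i, c i ^ 2)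
    {f : κ → ℝ} (hf : ∀ a, 0 ≤ f a) :
    ∑ a, ∑ b, ∑ c, ∑ e, (f a + f b + f c + f e) * entryCov A a b c e ^ 2 ≤
      4 * (s * w) * ∑ a, f a := by
  have hfirst := sum_mul_entryCov_sq_le hA hs hw₀ hw hf
  have hsecond : ∑ a, ∑ b, ∑ c, ∑ e, f b * entryCov A a b c e ^ 2 =
      ∑ a, ∑ b, ∑ c, ∑ e, f a * entryCov A a b c e ^ 2 := by
    rw [Finset.sum_comm]
    simp only [entryCov_swap_left hA]
  have hlast : ∑ a, ∑ b, ∑ c, ∑ e, (f c + f e) * entryCov A a b c e ^ 2 =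
      ∑ a, ∑ b, ∑ c, ∑ e, (f a + f b) * entryCov A a b c e ^ 2 := by
    rw [← sum_rotate, ← sum_rotate]
    simp only [entryCov_comm]
  simp only [add_assoc (f _ + f _), add_mul (f _ + f _), Finset.sum_add_distrib, hlast]
  simp only [add_mul (f _), Finset.sum_add_distrib, hsecond]
  linarith

lemma abs_mul_pow_mul_pow_le (x y z : ℝ) {k l : ℕ} (hm : Even (k + l + 1)) :
    |x * y ^ k * z ^ l| ≤ x ^ (k + l + 1) + y ^ (k + l + 1) + z ^ (k + l + 1) := by
  set M := max (max |x| |y|) |z|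
  have hx : |x| ≤ M := (le_max_left _ _).trans (le_max_left _ _)
  have hy : |y| ≤ M := (le_max_right _ _).trans (le_max_left _ _)
  have hz : |z| ≤ M := le_max_right _ _
  have hmax : M ^ (k + l + 1) ≤ x ^ (k + l + 1) + y ^ (k + l + 1) + z ^ (k + l + 1) := by
    have := hm.pow_nonneg x
    have := hm.pow_nonneg y
    have := hm.pow_nonneg z
    rw [← hm.pow_abs x, ← hm.pow_abs y, ← hm.pow_abs z] at *
    rcases max_choice (max |x| |y|) |z| with h | h <;> rcases max_choice |x| |y| with h' | h' <;>
      simp only [M, h, h'] <;> linarith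
  calc |x * y ^ k * z ^ l| = |x| * |y| ^ k * |z| ^ l := by rw [abs_mul, abs_mul, abs_pow, abs_pow]
    _ ≤ M * M ^ k * M ^ l := by gcongr
    _ = M ^ (k + l + 1) := by ring
    _ ≤ _ := hmax

lemma trace_sum_cross_diagonal (A : ι → Matrix κ κ ℝ) (x y z : κ → ℝ) :
    (∑ i, ∑ j, A j * diagonal x * A i * diagonal y * A j * diagonal z * A i).trace =
      ∑ a, ∑ b, ∑ c, ∑ e, entryCov A a b c e * entryCov A b c e a * (x b * y c * z e) := by
  have hentry (i j : ι) : (A j * diagonal x * A i * diagonal y * A j * diagonal z * A i).trace =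
      ∑ a, ∑ b, ∑ c, ∑ e, A j a b * A j c e * (A i b c * A i e a) * (x b * y c * z e) := by
    rw [mul_assoc (A j * _) (A i), mul_assoc _ (A j), trace_mul_mul_mul]
    simp only [mul_diagonal]
    refine Finset.sum_congr rfl fun a _ ↦ Finset.sum_congr rfl fun b _ ↦
      Finset.sum_congr rfl fun c _ ↦ Finset.sum_congr rfl fun e _ ↦ ?_
    ring
  simp only [trace_sum, hentry, entryCov,
    Finset.sum_comm (s := (Finset.univ : Finset ι)) (t := (Finset.univ : Finset κ))]
  simp only [← Finset.sum_mul, ← Finset.mul_sum]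

-- Both covariances in the crossed sum involve the same four indices, so AM-GM separates them into
-- two sums of squares that agree after rotating the indices.
lemma trace_sum_cross_diagonal_le (hA : ∀ i, (A i).IsHermitian) (hs : ∑ i, A i * A i ≤ s • 1)
    (hw₀ : 0 ≤ w) (hw : ∀ c : ι → ℝ, frobNormSq (∑ i, c i • A i) ≤ w * ∑ i, c i ^ 2)
    (x : κ → ℝ) {k l : ℕ} (hm : Even (k + l + 1)) :
    (∑ i, ∑ j, A j * diagonal x * A i * diagonal x ^ k * A j * diagonal x ^ l * A i).trace ≤
      4 * (s * w) * ∑ a, x a ^ (k + l + 1) := by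
  let f (a : κ) : ℝ := x a ^ (k + l + 1)
  have hf (a : κ) : 0 ≤ f a := hm.pow_nonneg _
  let F (a b c e : κ) : ℝ := (f a + f b + f c + f e) * entryCov A a b c e ^ 2
  have hterm (a b c e : κ) :
      entryCov A a b c e * entryCov A b c e a * (x b * x c ^ k * x e ^ l) ≤
        (F a b c e + F b c e a) / 2 := by
    have hweight := abs_mul_pow_mul_pow_le (x b) (x c) (x e) hm
    calc _ ≤ |entryCov A a b c e * entryCov A b c e a| * |x b * x c ^ k * x e ^ l| :=
          (le_abs_self _).trans_eq (abs_mul _ _)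
      _ ≤ (entryCov A a b c e ^ 2 + entryCov A b c e a ^ 2) / 2 * (f a + f b + f c + f e) := by
          gcongr
          · rw [abs_mul, ← sq_abs (entryCov A a b c e), ← sq_abs (entryCov A b c e a)]
            linarith [two_mul_le_add_sq |entryCov A a b c e| |entryCov A b c e a|]
          · linarith [hf a]
      _ = (F a b c e + F b c e a) / 2 := by simp only [F]; ring
  simp only [diagonal_pow, trace_sum_cross_diagonal, Pi.pow_apply]
  calc _ ≤ ∑ a, ∑ b, ∑ c, ∑ e, (F a b c e + F b c e a) / 2 := by
        gcongr
        exact hterm _ _ _ _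
    _ = ∑ a, ∑ b, ∑ c, ∑ e, F a b c e := by
        simp only [← Finset.sum_div, Finset.sum_add_distrib, sum_rotate F, add_self_div_two]
    _ ≤ 4 * (s * w) * ∑ a, f a := sum_add_mul_entryCov_sq_le hA hs hw₀ hw hf

lemma trace_sum_cross_le (hA : ∀ i, (A i).IsHermitian) (hs : ∑ i, A i * A i ≤ s • 1)
    (hw₀ : 0 ≤ w) (hw : ∀ c : ι → ℝ, frobNormSq (∑ i, c i • A i) ≤ w * ∑ i, c i ^ 2)
    {X : Matrix κ κ ℝ} (hX : X.IsHermitian) {k l : ℕ} (hm : Even (k + l + 1)) :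
    (∑ i, ∑ j, A j * X * A i * X ^ k * A j * X ^ l * A i).trace ≤
      4 * (s * w) * (X ^ (k + l + 1)).trace := by
  obtain ⟨φ, hφtrace, x, hφX⟩ := exists_starAlgEquiv_eq_diagonal hX
  have hfrob (M : Matrix κ κ ℝ) : frobNormSq (φ M) = frobNormSq M := by
    rw [frobNormSq_eq_trace, ← map_star, ← map_mul, hφtrace, frobNormSq_eq_trace]
  have hsφ : ∑ i, φ (A i) * φ (A i) ≤ s • 1 := by
    simpa only [map_sum, map_mul, map_smul, map_one] using OrderHomClass.mono φ hs
  have hwφ (c : ι → ℝ) : frobNormSq (∑ i, c i • φ (A i)) ≤ w * ∑ i, c i ^ 2 := by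
    simpa only [← map_smul, ← map_sum, hfrob] using hw c
  rw [← hφtrace, ← hφtrace (X ^ _)]
  simpa only [map_sum, map_mul, map_pow, hφX, diagonal_pow, trace_diagonal, Pi.pow_apply] using
    trace_sum_cross_diagonal_le (fun i ↦ ((hA i).isSelfAdjoint.map φ).isHermitian) hsφ hw₀ hwφ x hm

end EntryCovariance

section TraceMoments

open MvPolynomial Matrix
open scoped MatrixOrder

variable {ι κ : Type*} [Fintype ι] {A : ι → Matrix κ κ ℝ} {s w : ℝ}

lemma isHermitian_sum_smul (hA : ∀ i, (A i).IsHermitian) (g : ι → ℝ) :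
    (∑ i, g i • A i).IsHermitian :=
  (isSelfAdjoint_sum _ fun i _ ↦ (IsSelfAdjoint.all (g i)).smul (hA i).isSelfAdjoint).isHermitian

variable [Fintype κ] [DecidableEq κ]

lemma pow_nonneg_of_even {X : Matrix κ κ ℝ} (hX : X.IsHermitian) {m : ℕ} (hm : Even m) :
    0 ≤ X ^ m := by
  obtain ⟨k, rfl⟩ := hm
  simpa only [star_pow, hX.isSelfAdjoint.star_eq, ← pow_add] using star_mul_self_nonneg (X ^ k)

lemma trace_sum_mul_pow_mul_pow_le (hA : ∀ i, (A i).IsHermitian) (hs : ∑ i, A i * A i ≤ s • 1)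
    {X : Matrix κ κ ℝ} (hX : X.IsHermitian) (q : ℕ) :
    (∑ i, ∑ k ∈ Finset.range (2 * q + 3), A i * X ^ k * A i * X ^ (2 * q + 2 - k)).trace ≤
      4 * s * (X ^ (2 * q + 2)).trace +
        (2 * q + 3) * (∑ i, A i * X ^ 2 * A i * X ^ (2 * q)).trace := by
  simp only [trace_sum]
  calc _ ≤ ∑ i, (4 * (A i * A i * X ^ (2 * q + 2)).trace +
          (2 * q + 3) * (A i * X ^ 2 * A i * X ^ (2 * q)).trace) :=
        Finset.sum_le_sum fun i _ ↦ sum_trace_mul_pow_mul_pow_le (hA i) hX q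
    _ = 4 * ((∑ i, A i * A i) * X ^ (2 * q + 2)).trace +
          (2 * q + 3) * ∑ i, (A i * X ^ 2 * A i * X ^ (2 * q)).trace := by
        rw [Finset.sum_add_distrib, ← Finset.mul_sum, ← Finset.mul_sum, Finset.sum_mul, trace_sum]
    _ ≤ 4 * (s * (X ^ (2 * q + 2)).trace) +
          (2 * q + 3) * ∑ i, (A i * X ^ 2 * A i * X ^ (2 * q)).trace := by
        gcongr
        exact trace_mul_le_of_le_smul_one hs (pow_nonneg_of_even hX (by simp [parity_simps]))
    _ = _ := by ring

lemma trace_sum_sq_mul_conj_add_cross_le (hA : ∀ i, (A i).IsHermitian)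
    (hs : ∑ i, A i * A i ≤ s • 1) (hs₀ : 0 ≤ s) (hw₀ : 0 ≤ w)
    (hw : ∀ c : ι → ℝ, frobNormSq (∑ i, c i • A i) ≤ w * ∑ i, c i ^ 2)
    {X : Matrix κ κ ℝ} (hX : X.IsHermitian) (q : ℕ) :
    (∑ i, ∑ j, (A j * A j * (A i * X ^ (2 * q) * A i) + ∑ k ∈ Finset.range (2 * q),
        A j * X * A i * X ^ k * A j * X ^ (2 * q - 1 - k) * A i)).trace ≤
      (s ^ 2 + 8 * q * s * w) * (X ^ (2 * q)).trace := by
  have hcross (k : ℕ) (hk : k ∈ Finset.range (2 * q)) :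
      (∑ i, ∑ j, A j * X * A i * X ^ k * A j * X ^ (2 * q - 1 - k) * A i).trace ≤
        4 * (s * w) * (X ^ (2 * q)).trace := by
    rw [Finset.mem_range] at hk
    have hexponent : k + (2 * q - 1 - k) + 1 = 2 * q := by omega
    have hm : Even (k + (2 * q - 1 - k) + 1) := ⟨q, by omega⟩
    exact (trace_sum_cross_le hA hs hw₀ hw hX hm).trans_eq (by rw [hexponent])
  simp only [Finset.sum_add_distrib, trace_add,
    Finset.sum_comm (s := Finset.univ) (t := Finset.range (2 * q))]
  rw [trace_sum (Finset.range (2 * q))]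
  calc _ ≤ s ^ 2 * (X ^ (2 * q)).trace +
          ∑ k ∈ Finset.range (2 * q), 4 * (s * w) * (X ^ (2 * q)).trace :=
        add_le_add (trace_sum_sq_mul_conj_le hA hs hs₀ (pow_nonneg_of_even hX (even_two_mul q)))
          (Finset.sum_le_sum hcross)
    _ = (s ^ 2 + 8 * q * s * w) * (X ^ (2 * q)).trace := by
        rw [Finset.sum_const, Finset.card_range, nsmul_eq_mul]
        push_cast
        ring

/-- The even trace moments `𝔼 tr X^(2q)` of `X = ∑ i, g i • A i`. -/
noncomputable def traceMoment (A : ι → Matrix κ κ ℝ) (q : ℕ) : ℝ :=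
  gaussianTrace (gaussianSeries A ^ (2 * q))

lemma traceMoment_eq_integral (A : ι → Matrix κ κ ℝ) (q : ℕ) :
    traceMoment A q = ∫ g, ((∑ i, g i • A i) ^ (2 * q)).trace ∂stdGaussianPi ι := by
  simp only [traceMoment, gaussianTrace_eq_integral, map_pow, eval_mapMatrix_gaussianSeries]

lemma traceMoment_zero (A : ι → Matrix κ κ ℝ) : traceMoment A 0 = Fintype.card κ := by
  simp [traceMoment_eq_integral]

lemma traceMoment_nonneg (hA : ∀ i, (A i).IsHermitian) (q : ℕ) : 0 ≤ traceMoment A q := by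
  rw [traceMoment_eq_integral]
  exact integral_nonneg fun g ↦
    (pow_nonneg_of_even (isHermitian_sum_smul hA g) (even_two_mul q)).posSemidef.trace_nonneg

lemma traceMoment_one_le (hs : ∑ i, A i * A i ≤ s • 1) : traceMoment A 1 ≤ s * traceMoment A 0 := by
  calc traceMoment A 1
      = gaussianTrace (∑ i, C.mapMatrix (A i) * C.mapMatrix (A i)) := by
        simpa [traceMoment] using gaussianTrace_gaussianSeries_pow_add_two A 0
    _ ≤ gaussianTrace (s • 1) := gaussianTrace_mono fun g ↦ by
        simpa only [map_sum, map_mul, map_one, eval_mapMatrix_C, eval_mapMatrix_smul, trace_smul,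
          smul_eq_mul, mul_one] using trace_mul_le_of_le_smul_one hs zero_le_one
    _ = s * traceMoment A 0 := map_smul gaussianTrace s 1

lemma gaussianTrace_pow_add_two_le (hA : ∀ i, (A i).IsHermitian) (hs : ∑ i, A i * A i ≤ s • 1)
    (q : ℕ) :
    gaussianTrace (gaussianSeries A ^ (2 * q + 4)) ≤
      4 * s * gaussianTrace (gaussianSeries A ^ (2 * q + 2)) + (2 * q + 3) *
        gaussianTrace (∑ i, C.mapMatrix (A i) * gaussianSeries A ^ 2 * C.mapMatrix (A i) *
          gaussianSeries A ^ (2 * q)) := by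
  rw [gaussianTrace_gaussianSeries_pow_add_two]
  simp only [← smul_eq_mul (4 * s), ← smul_eq_mul (2 * (q : ℝ) + 3), ← map_smul, ← map_add]
  refine gaussianTrace_mono fun g ↦ ?_
  simpa only [map_sum, map_mul, map_pow, map_add, eval_mapMatrix_C, eval_mapMatrix_smul,
    eval_mapMatrix_gaussianSeries, trace_add, trace_smul, smul_eq_mul]
    using trace_sum_mul_pow_mul_pow_le hA hs (isHermitian_sum_smul hA g) q

lemma traceMoment_add_two_le (hA : ∀ i, (A i).IsHermitian) (hs : ∑ i, A i * A i ≤ s • 1)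
    (hs₀ : 0 ≤ s) (hw₀ : 0 ≤ w)
    (hw : ∀ c : ι → ℝ, frobNormSq (∑ i, c i • A i) ≤ w * ∑ i, c i ^ 2) (q : ℕ) :
    traceMoment A (q + 2) ≤ 4 * s * traceMoment A (q + 1) +
      (2 * q + 3) * (s ^ 2 + 8 * q * s * w) * traceMoment A q := by
  have hsecond : gaussianTrace (∑ i, C.mapMatrix (A i) * gaussianSeries A ^ 2 *
      C.mapMatrix (A i) * gaussianSeries A ^ (2 * q)) ≤
      (s ^ 2 + 8 * q * s * w) * traceMoment A q := by
    rw [gaussianTrace_conj_gaussianSeries_sq, traceMoment, ← smul_eq_mul (s ^ 2 + _), ← map_smul]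
    refine gaussianTrace_mono fun g ↦ ?_
    simpa only [map_sum, map_mul, map_pow, map_add, eval_mapMatrix_C, eval_mapMatrix_smul,
      eval_mapMatrix_gaussianSeries, trace_smul, smul_eq_mul]
      using trace_sum_sq_mul_conj_add_cross_le hA hs hs₀ hw₀ hw (isHermitian_sum_smul hA g) q
  calc traceMoment A (q + 2)
    _ ≤ 4 * s * traceMoment A (q + 1) +
        (2 * q + 3) * ((s ^ 2 + 8 * q * s * w) * traceMoment A q) :=
      (gaussianTrace_pow_add_two_le hA hs q).trans
        (add_le_add le_rfl (mul_le_mul_of_nonneg_left hsecond (by positivity)))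
    _ = _ := by ring

lemma le_mul_pow_of_two_step {u : ℕ → ℝ} {a b c L : ℝ} {p : ℕ} (ha : 0 ≤ a) (hb : 0 ≤ b)
    (hc : 0 ≤ c) (hL : 0 ≤ L) (hab : a * L + b ≤ L ^ 2) (h₀ : u 0 ≤ c) (h₁ : u 1 ≤ c * L)
    (hstep : ∀ q, q + 2 ≤ p → u (q + 2) ≤ a * u (q + 1) + b * u q) {q : ℕ} (hq : q ≤ p) :
    u q ≤ c * L ^ q := by
  induction q using Nat.twoStepInduction with
  | zero => simpa using h₀
  | one => simpa using h₁
  | more q ih₀ ih₁ =>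
    calc u (q + 2) ≤ a * u (q + 1) + b * u q := hstep q hq
      _ ≤ a * (c * L ^ (q + 1)) + b * (c * L ^ q) := by
          gcongr
          exacts [ih₁ (by omega), ih₀ (by omega)]
      _ = c * L ^ q * (a * L + b) := by ring
      _ ≤ c * L ^ q * L ^ 2 := by gcongr
      _ = c * L ^ (q + 2) := by ring

lemma traceMoment_le (hA : ∀ i, (A i).IsHermitian) (hs : ∑ i, A i * A i ≤ s • 1)
    (hs₀ : 0 ≤ s) (hw₀ : 0 ≤ w)
    (hw : ∀ c : ι → ℝ, frobNormSq (∑ i, c i • A i) ≤ w * ∑ i, c i ^ 2) {p : ℕ} {L : ℝ}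
    (hsL : s ≤ L) (hL : 4 * s * L + 2 * p * (s ^ 2 + 8 * p * s * w) ≤ L ^ 2) :
    traceMoment A p ≤ Fintype.card κ * L ^ p := by
  refine le_mul_pow_of_two_step (u := traceMoment A) (a := 4 * s)
    (b := 2 * p * (s ^ 2 + 8 * p * s * w)) (by positivity) (by positivity) (by positivity)
    (hs₀.trans hsL) hL (traceMoment_zero A).le ?_ (fun q hq ↦ ?_) le_rfl
  · rw [← traceMoment_zero A, mul_comm]
    exact (traceMoment_one_le hs).trans (by gcongr; exact traceMoment_nonneg hA 0)
  · have hq' : (q : ℝ) + 2 ≤ p := by exact_mod_cast hq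
    have := traceMoment_nonneg hA q
    refine (traceMoment_add_two_le hA hs hs₀ hw₀ hw q).trans ?_
    gcongr <;> linarith

end TraceMoments

lemma rpow_quarter_mul_pow_four {l : ℝ} (hl : 0 ≤ l) (t : ℝ) :
    (l ^ ((1 : ℝ) / 4) * t) ^ 4 = l * (t ^ 2) ^ 2 := by
  rw [mul_pow, ← Real.rpow_mul_natCast hl, ← pow_mul]
  norm_num

lemma rpow_half_mul_sqrt_pow_four {l t : ℝ} (hl : 0 ≤ l) (ht : 0 ≤ t) :
    (l ^ ((1 : ℝ) / 2) * √t) ^ 4 = l ^ 2 * t ^ 2 := by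
  rw [← Real.sqrt_eq_rpow, ← Real.sqrt_mul hl, ← mul_pow, pow_mul _ 2 2,
    Real.sq_sqrt (mul_nonneg hl ht)]

lemma moment_rate_le {s w x y l p : ℝ} (hs : 0 ≤ s) (hw : 0 ≤ w) (hx : 0 ≤ x) (hy : 0 ≤ y)
    (hp₀ : 0 ≤ p) (hl : 1 / 2 ≤ l) (hp : p ≤ 3 * l)
    (hxs : x ^ 4 = l * s ^ 2) (hys : y ^ 4 = l ^ 2 * (s * w)) :
    s ≤ 12 * (x + y) ^ 2 ∧
      4 * s * (12 * (x + y) ^ 2) + 2 * p * (s ^ 2 + 8 * p * s * w) ≤ (12 * (x + y) ^ 2) ^ 2 := by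
  have hL : 12 * x ^ 2 + 12 * y ^ 2 ≤ 12 * (x + y) ^ 2 := by nlinarith [mul_nonneg hx hy]
  have hsx : s ≤ 3 / 2 * x ^ 2 :=
    le_of_sq_le_sq (by nlinarith [sq_nonneg s]) (by positivity)
  have hps : p * s ^ 2 ≤ 3 * x ^ 4 := by
    rw [hxs, ← mul_assoc]
    gcongr
  have hpsw : p ^ 2 * (s * w) ≤ 9 * y ^ 4 := by
    calc p ^ 2 * (s * w) ≤ (3 * l) ^ 2 * (s * w) := by gcongr
      _ = 9 * y ^ 4 := by rw [hys]; ring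
  set L := 12 * (x + y) ^ 2
  refine ⟨by nlinarith [sq_nonneg y], ?_⟩
  calc 4 * s * L + 2 * p * (s ^ 2 + 8 * p * s * w)
      = 4 * s * L + 2 * (p * s ^ 2) + 16 * (p ^ 2 * (s * w)) := by ring
    _ ≤ 4 * (3 / 2 * x ^ 2) * L + 2 * (3 * x ^ 4) + 16 * (9 * y ^ 4) := by gcongr
    _ ≤ 6 * x ^ 2 * L + (12 * x ^ 2 + 12 * y ^ 2) * (6 * x ^ 2 + 12 * y ^ 2) := by
        nlinarith [sq_nonneg (x * y), sq_nonneg (x ^ 2)]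
    _ ≤ 6 * x ^ 2 * L + L * (L - 6 * x ^ 2) := by gcongr; linarith
    _ = L ^ 2 := by ring

section OperatorNorm

open Matrix MvPolynomial Unitary
open scoped MatrixOrder Matrix.Norms.L2Operator

variable {ι κ : Type*} [Fintype κ]

lemma norm_pow_le_sum_pow (x : κ → ℝ) {m : ℕ} (hm : Even m) (hm₀ : m ≠ 0) :
    ‖x‖ ^ m ≤ ∑ a, x a ^ m := by
  rcases isEmpty_or_nonempty κ
  · simp [Subsingleton.elim x 0, hm₀]
  obtain ⟨a, ha⟩ := Finite.exists_max fun a ↦ ‖x a‖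
  calc ‖x‖ ^ m ≤ ‖x a‖ ^ m := by
        gcongr
        exact (pi_norm_le_iff_of_nonneg (norm_nonneg _)).mpr ha
    _ = x a ^ m := hm.pow_abs _
    _ ≤ _ := Finset.single_le_sum (fun b _ ↦ hm.pow_nonneg (x b)) (Finset.mem_univ a)

variable [DecidableEq κ]

lemma opNorm_eq_norm {m : Type*} [Fintype m] (M : Matrix m κ ℝ) : opNorm M = ‖M‖ := rfl

lemma le_norm_smul_one {M : Matrix κ κ ℝ} (hM : M.IsHermitian) : M ≤ ‖M‖ • 1 := by
  nontriviality Matrix κ κ ℝ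
  rw [← Algebra.algebraMap_eq_smul_one]
  exact le_algebraMap_of_spectrum_le
    (fun r hr ↦ (Real.le_norm_self r).trans (spectrum.norm_le_norm_of_mem hr)) hM.isSelfAdjoint

lemma norm_eigenvalues {X : Matrix κ κ ℝ} (hX : X.IsHermitian) : ‖hX.eigenvalues‖ = ‖X‖ := by
  nth_rw 2 [hX.spectral_theorem]
  rw [conjStarAlgAut_apply, mul_assoc, CStarRing.norm_coe_unitary_mul, ← coe_star,
    CStarRing.norm_mul_coe_unitary, l2_opNorm_diagonal]
  rfl

lemma norm_pow_le_trace_pow {X : Matrix κ κ ℝ} (hX : X.IsHermitian) {m : ℕ} (hm : Even m)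
    (hm₀ : m ≠ 0) : ‖X‖ ^ m ≤ (X ^ m).trace := by
  have htrace : (X ^ m).trace = ∑ a, hX.eigenvalues a ^ m := by
    conv_lhs => rw [hX.spectral_theorem, ← map_pow, conjStarAlgAut_apply]
    rw [trace_mul_cycle, coe_star_mul_self, one_mul, diagonal_pow, trace_diagonal]
    rfl
  rw [htrace, ← norm_eigenvalues hX]
  exact norm_pow_le_sum_pow hX.eigenvalues hm hm₀

variable [Fintype ι]

lemma integral_norm_pow_le_traceMoment {A : ι → Matrix κ κ ℝ} (hA : ∀ i, (A i).IsHermitian)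
    {p : ℕ} (hp : p ≠ 0) :
    (∫ g, ‖∑ i, g i • A i‖ ∂stdGaussianPi ι) ^ (2 * p) ≤ traceMoment A p := by
  have hp' : 2 * p ≠ 0 := by positivity
  have hle (g : ι → ℝ) : ‖∑ i, g i • A i‖ ^ (2 * p) ≤ ((∑ i, g i • A i) ^ (2 * p)).trace :=
    norm_pow_le_trace_pow (isHermitian_sum_smul hA g) (even_two_mul p) hp'
  have htrace : Integrable (fun g ↦ ((∑ i, g i • A i) ^ (2 * p)).trace) (stdGaussianPi ι) := by
    simpa only [AddMonoidHom.map_trace, ← RingHom.mapMatrix_apply, map_pow,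
      eval_mapMatrix_gaussianSeries] using
      integrable_eval_stdGaussianPi (gaussianSeries A ^ (2 * p)).trace
  have hnorm : Integrable (fun g : ι → ℝ ↦ ‖∑ i, g i • A i‖) (stdGaussianPi ι) :=
    (integrable_finsetSum _ fun i _ ↦ Integrable.smul_const
      (by simpa using integrable_eval_stdGaussianPi (X i)) (A i)).norm
  have hpow : Integrable (fun g ↦ ‖∑ i, g i • A i‖ ^ (2 * p)) (stdGaussianPi ι) :=
    htrace.mono' (hnorm.aestronglyMeasurable.pow _) <| ae_of_all _ fun g ↦ by
      rw [Real.norm_of_nonneg (by positivity)]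
      exact hle g
  calc _ ≤ ∫ g, ‖∑ i, g i • A i‖ ^ (2 * p) ∂stdGaussianPi ι :=
        (even_two_mul p).convexOn_pow.map_integral_le (by fun_prop) isClosed_univ
          (ae_of_all _ fun _ ↦ Set.mem_univ _) hnorm hpow
    _ ≤ traceMoment A p := by
        rw [traceMoment_eq_integral]
        exact integral_mono hpow htrace hle

lemma integral_norm_sq_le {A : ι → Matrix κ κ ℝ} (hA : ∀ i, (A i).IsHermitian) {s w L : ℝ}
    (hs : ∑ i, A i * A i ≤ s • 1) (hs₀ : 0 ≤ s) (hw₀ : 0 ≤ w)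
    (hw : ∀ c : ι → ℝ, frobNormSq (∑ i, c i • A i) ≤ w * ∑ i, c i ^ 2) {p : ℕ} (hp : p ≠ 0)
    (hcard : Fintype.card κ ≤ Real.exp p) (hsL : s ≤ L)
    (hL : 4 * s * L + 2 * p * (s ^ 2 + 8 * p * s * w) ≤ L ^ 2) :
    (∫ g, ‖∑ i, g i • A i‖ ∂stdGaussianPi ι) ^ 2 ≤ 3 * L := by
  have hL₀ : 0 ≤ L := hs₀.trans hsL
  refine (pow_le_pow_iff_left₀ (sq_nonneg _) (by positivity) hp).mp ?_
  rw [← pow_mul]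
  calc _ ≤ traceMoment A p := integral_norm_pow_le_traceMoment hA hp
    _ ≤ Fintype.card κ * L ^ p := traceMoment_le hA hs hs₀ hw₀ hw hsL hL
    _ ≤ Real.exp p * L ^ p := by gcongr
    _ = (Real.exp 1 * L) ^ p := by rw [mul_pow, Real.exp_one_pow]
    _ ≤ (3 * L) ^ p := by gcongr; exact Real.exp_one_lt_three.le

lemma integral_norm_le {A : ι → Matrix κ κ ℝ} (hA : ∀ i, (A i).IsHermitian) {σ v l : ℝ}
    (hσ : 0 ≤ σ) (hv : 0 ≤ v) (hs : ∑ i, A i * A i ≤ σ ^ 2 • 1)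
    (hw : ∀ c : ι → ℝ, frobNormSq (∑ i, c i • A i) ≤ v ^ 2 * ∑ i, c i ^ 2)
    (hl : 1 / 2 ≤ l) (hcard : Fintype.card κ ≤ Real.exp l) :
    ∫ g, ‖∑ i, g i • A i‖ ∂stdGaussianPi ι ≤
      6 * (l ^ ((1 : ℝ) / 4) * σ + l ^ ((1 : ℝ) / 2) * √(v * σ)) := by
  have hl₀ : 0 < l := by linarith
  have hp : (⌈l⌉₊ : ℝ) ≤ 3 * l := by linarith [Nat.ceil_lt_add_one hl₀.le]
  have hx4 := rpow_quarter_mul_pow_four hl₀.le σ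
  have hy4 : (l ^ ((1 : ℝ) / 2) * √(v * σ)) ^ 4 = l ^ 2 * (σ ^ 2 * v ^ 2) := by
    rw [rpow_half_mul_sqrt_pow_four hl₀.le (mul_nonneg hv hσ), mul_pow, mul_comm (v ^ 2)]
  obtain ⟨hsL, hL⟩ := moment_rate_le (sq_nonneg σ) (sq_nonneg v) (by positivity) (by positivity)
    (Nat.cast_nonneg _) hl hp hx4 hy4
  have hsq := integral_norm_sq_le hA hs (sq_nonneg σ) (sq_nonneg v) hw
    (Nat.ceil_pos.mpr hl₀).ne' (hcard.trans (Real.exp_le_exp.mpr (Nat.le_ceil l))) hsL hL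
  exact le_of_sq_le_sq (hsq.trans_eq (by ring)) (by positivity)

end OperatorNorm

section MatrixParameters

open Matrix
open scoped MatrixOrder Matrix.Norms.L2Operator

variable {n d : ℕ}

lemma sum_mul_self_le_sigmaX_sq {A : Fin n → Matrix (Fin d) (Fin d) ℝ}
    (hA : ∀ i, (A i).IsHermitian) : ∑ i, A i * A i ≤ sigmaX A ^ 2 • 1 := by
  rw [sigmaX, opNorm_eq_norm, Real.sq_sqrt (norm_nonneg _)]
  refine le_norm_smul_one (isSelfAdjoint_sum _ fun i _ ↦ ?_).isHermitian
  simpa only [sq] using (hA i).isSelfAdjoint.pow 2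

lemma frobNormSq_sum_smul_le (A : Fin n → Matrix (Fin d) (Fin d) ℝ) (c : Fin n → ℝ) :
    frobNormSq (∑ i, c i • A i) ≤ vX A ^ 2 * ∑ i, c i ^ 2 := by
  let V : Matrix (Fin d × Fin d) (Fin n) ℝ := of fun p i ↦ A i p.1 p.2
  have hcov : covX A = Vᴴᴴ * Vᴴ := by
    ext p q
    simp [covX, V, Matrix.sum_apply, mul_apply]
  have hV : vX A ^ 2 = ‖V‖ ^ 2 := by
    rw [vX, opNorm_eq_norm, Real.sq_sqrt (norm_nonneg _), hcov, l2_opNorm_conjTranspose_mul_self,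
      l2_opNorm_conjTranspose, sq]
  have hVc : frobNormSq (∑ i, c i • A i) = ‖WithLp.toLp 2 (V *ᵥ c)‖ ^ 2 := by
    simp [EuclideanSpace.norm_sq_eq, Fintype.sum_prod_type, frobNormSq, V, mulVec, dotProduct,
      Matrix.sum_apply, mul_comm]
  have hc : ∑ i, c i ^ 2 = ‖WithLp.toLp 2 c‖ ^ 2 := by
    simp [EuclideanSpace.norm_sq_eq]
  rw [hV, hVc, hc, ← mul_pow]
  gcongr
  exact l2_opNorm_mulVec V (WithLp.toLp 2 c)

end MatrixParameters

end MatrixConcentration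

/-- **Tropp-type matrix concentration bound (footnote of Section 1.1).** There is a
universal constant `C > 0` such that for all positive integers `n` and `d ≥ 2` and
symmetric matrices `A 1, …, A n ∈ ℝ^{d×d}`, the Gaussian random matrix
`X = ∑ g i • A i` satisfies
`𝔼[‖X‖_op] ≤ C ((log d)^{1/4} σ(X) + (log d)^{1/2} √(v(X) σ(X)))`. -/
theorem tropp_bbvh_matrix_concentration :
    ∃ C : ℝ, 0 < C ∧ ∀ (n d : ℕ), 0 < n → 2 ≤ d →
      ∀ A : Fin n → Matrix (Fin d) (Fin d) ℝ, (∀ i, (A i).IsSymm) →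
        (∫ g, opNorm (∑ i, g i • A i) ∂(gaussianPi n)) ≤
          C * ((Real.log d) ^ ((1 : ℝ) / 4) * sigmaX A +
            (Real.log d) ^ ((1 : ℝ) / 2) * Real.sqrt (vX A * sigmaX A)) := by
  refine ⟨6, by norm_num, fun n d _ hd A hA ↦ ?_⟩
  have hHermitian (i : Fin n) : (A i).IsHermitian := Matrix.isHermitian_iff_isSymm.mpr (hA i)
  have hd₂ : (2 : ℝ) ≤ d := by exact_mod_cast hd
  have hlog : 1 / 2 ≤ Real.log d := by
    linarith [Real.log_two_gt_d9, Real.log_le_log two_pos hd₂]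
  have hcard : (Fintype.card (Fin d) : ℝ) ≤ Real.exp (Real.log d) := by
    rw [Fintype.card_fin, Real.exp_log (by linarith)]
  exact MatrixConcentration.integral_norm_le hHermitian (Real.sqrt_nonneg _) (Real.sqrt_nonneg _)
    (MatrixConcentration.sum_mul_self_le_sigmaX_sq hHermitian)
    (MatrixConcentration.frobNormSq_sum_smul_le A) hlog hcard
end

section
/- There exists a universal constant C > 0 such that the following holds for all positive integers n ≥ 2 and d ≥ 2. Given symmetric matrices A_1, ..., A_n ∈ ℝ^{d×d} with ‖A_i‖_op ≤ 1 for all i, there exist signs x ∈ {−1, +1}^n such that ‖∑_{i=1}^n x_i A_i‖_op ≤ C · ((log d)^{1/4} · √n + (log d)^{1/2} · (n d)^{1/4}). In particular, the discrepancy is o(√(n log d)) whenever d = o(n). -/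
open MeasureTheory ProbabilityTheory

/-!
Partial coloring: let `T y = ∑ y i • A i`, let `S` be the set of unsaturated coordinates, and let
`H` be a subspace of `ℝ^S` of dimension at least `9 / 10 * |S|`. Over the face of the cube that
frees `S`, minimise `x ↦ 𝔼 ‖T x + T P g‖ - lam * ‖x‖ ^ 2`, where `g` is standard Gaussian and `P`
projects onto `H`. If more than half of `S` stayed free at the minimiser, the second variation of
this energy would be nonnegative on a subspace of `H` of dimension proportional to `|S|`. But the
smoothed norm has a total second variation of at most `𝔼 ‖T P g‖`, which contradicts the choice of
`lam`, a multiple of `𝔼 ‖T P g‖ / |S|`. Iterating gives signs, at a cost that decreases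
geometrically.

It remains to choose `H` with `𝔼 ‖T P g‖` small. Since the `A i` have squared Frobenius norm at most
`D`, discarding the eigenvectors of the Gram form `y ↦ ‖T y‖_F ^ 2` with eigenvalues above `10 D`
costs at most a tenth of the dimension. Then `T P g` is a symmetric Gaussian matrix of variance at
most `|S|` and with covariance of norm at most `10 D`, and Gaussian integration by parts bounds the
growth of its trace moments: all but the four outermost terms of `𝔼 tr X ^ (m + 4)` are reduced to
crossing terms, in which the small covariance gains over the variance alone.
-/

section SmoothedNorm

variable {E : Type*} [NormedAddCommGroup E] [InnerProductSpace ℝ E] [FiniteDimensional ℝ E]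
  [MeasurableSpace E]
variable {F : Type*} [NormedAddCommGroup F] [NormedSpace ℝ F]

/-- The norm of `F` smoothed by Gaussian noise: the expectation of `‖y + A g‖` for a standard
Gaussian vector `g` of `E`. -/
noncomputable def smoothedNorm (A : E →L[ℝ] F) (y : F) : ℝ := ∫ g, ‖y + A g‖ ∂stdGaussian E

lemma smoothedNorm_nonneg (A : E →L[ℝ] F) (y : F) : 0 ≤ smoothedNorm A y :=
  integral_nonneg fun _ ↦ norm_nonneg _

lemma smoothedNorm_smul {c : ℝ} (hc : 0 ≤ c) (A : E →L[ℝ] F) (y : F) :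
    smoothedNorm (c • A) (c • y) = c * smoothedNorm A y := by
  simp only [smoothedNorm, _root_.smul_apply, ← smul_add, norm_smul, Real.norm_of_nonneg hc,
    integral_const_mul]

variable [BorelSpace E]

lemma integrable_norm_add_apply {E : Type*} [NormedAddCommGroup E] [NormedSpace ℝ E]
    [CompleteSpace E] [SecondCountableTopology E] [MeasurableSpace E] [BorelSpace E]
    (μ : Measure E) [IsGaussian μ] (A : E →L[ℝ] F) (y : F) :
    Integrable (fun g ↦ ‖y + A g‖) μ := by
  have hbound : Integrable (fun g : E ↦ ‖y‖ + ‖A‖ * ‖g‖) μ :=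
    (integrable_const _).add (IsGaussian.integrable_fun_id.norm.const_mul _)
  refine hbound.mono' (by fun_prop : Continuous fun g ↦ ‖y + A g‖).aestronglyMeasurable
    (.of_forall fun g ↦ ?_)
  rw [norm_norm]
  exact (norm_add_le _ _).trans (by gcongr; exact A.le_opNorm g)

@[simp]
lemma smoothedNorm_zero_left (y : F) : smoothedNorm (0 : E →L[ℝ] F) y = ‖y‖ := by
  simp [smoothedNorm]

lemma smoothedNorm_add_le (A B : E →L[ℝ] F) (y z : F) :
    smoothedNorm (A + B) (y + z) ≤ smoothedNorm A y + smoothedNorm B z := by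
  rw [smoothedNorm, smoothedNorm, smoothedNorm,
    ← integral_add (integrable_norm_add_apply _ A y) (integrable_norm_add_apply _ B z)]
  refine integral_mono (integrable_norm_add_apply _ _ _)
    ((integrable_norm_add_apply _ A y).add (integrable_norm_add_apply _ B z)) fun g ↦ ?_
  rw [_root_.add_apply, add_add_add_comm]
  exact norm_add_le _ _

lemma smoothedNorm_comp_isometry (A : E →L[ℝ] F) (e : E ≃ₗᵢ[ℝ] E) (y : F) :
    smoothedNorm (A ∘L (e : E →L[ℝ] E)) y = smoothedNorm A y := by
  have h := integral_map (μ := stdGaussian E) (φ := e) (by fun_prop)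
    (by fun_prop : Continuous fun g ↦ ‖y + A g‖).aestronglyMeasurable
  rw [stdGaussian_map e] at h
  exact h.symm

lemma smoothedNorm_le_add_norm_sub (A : E →L[ℝ] F) (y z : F) :
    smoothedNorm A y ≤ smoothedNorm A z + ‖y - z‖ := by
  simpa using smoothedNorm_add_le A 0 z (y - z)

lemma two_mul_smoothedNorm_le (A : E →L[ℝ] F) (y z : F) :
    2 * smoothedNorm A y ≤ smoothedNorm A (y + z) + smoothedNorm A (y - z) := by
  rw [← smoothedNorm_smul zero_le_two, two_smul, show (2 : ℝ) • y = y + z + (y - z) by module]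
  exact smoothedNorm_add_le ..

lemma continuous_smoothedNorm (A : E →L[ℝ] F) : Continuous (smoothedNorm A) := by
  refine (LipschitzWith.of_le_add fun y z ↦ ?_).continuous
  rw [dist_eq_norm]
  exact smoothedNorm_le_add_norm_sub A y z

-- The projection onto `L` is the average of the identity and the reflection in `L`.
lemma smoothedNorm_comp_starProjection_le (A : E →L[ℝ] F) (L : Submodule ℝ E) (y : F) :
    smoothedNorm (A ∘L L.starProjection) y ≤ smoothedNorm A y := by
  have haverage : (2 : ℝ) • (A ∘L L.starProjection) =
      A + A ∘L (L.reflection : E →L[ℝ] E) := by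
    ext g
    simp [Submodule.reflection_apply, two_smul]
  have h := smoothedNorm_add_le A (A ∘L (L.reflection : E →L[ℝ] E)) y y
  rw [← haverage, ← two_smul ℝ y, smoothedNorm_smul zero_le_two,
    smoothedNorm_comp_isometry] at h
  linarith

lemma norm_le_smoothedNorm (A : E →L[ℝ] F) (y : F) : ‖y‖ ≤ smoothedNorm A y := by
  simpa using smoothedNorm_comp_starProjection_le A ⊥ y

lemma smoothedNorm_smul_left_le {c : ℝ} (hc : 1 ≤ c) (A : E →L[ℝ] F) (y : F) :
    smoothedNorm (c • A) y ≤ smoothedNorm A y + (c - 1) * smoothedNorm A 0 := by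
  have h := smoothedNorm_add_le A ((c - 1) • A) y ((c - 1) • 0)
  rwa [smoothedNorm_smul (sub_nonneg.2 hc), smul_zero, add_zero,
    show A + (c - 1) • A = c • A by module] at h

lemma integrable_norm_add_apply_prod (A B : E →L[ℝ] F) (y : F) :
    Integrable (fun p : E × E ↦ ‖y + A p.1 + B p.2‖) ((stdGaussian E).prod (stdGaussian E)) := by
  simpa [add_assoc] using
    integrable_norm_add_apply ((stdGaussian E).prod (stdGaussian E)) (A.coprod B) y

lemma integrable_smoothedNorm_add_apply (A B : E →L[ℝ] F) (y : F) :
    Integrable (fun g ↦ smoothedNorm A (y + B g)) (stdGaussian E) :=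
  (integrable_norm_add_apply_prod B A y).integral_prod_left

lemma integral_smoothedNorm_add_apply (A B : E →L[ℝ] F) (y : F) :
    ∫ g, smoothedNorm A (y + B g) ∂stdGaussian E =
      ∫ p : E × E, ‖y + B p.1 + A p.2‖ ∂(stdGaussian E).prod (stdGaussian E) :=
  (integral_prod _ (integrable_norm_add_apply_prod B A y)).symm

lemma integral_smoothedNorm_comm (A B : E →L[ℝ] F) (y : F) :
    ∫ g, smoothedNorm A (y + B g) ∂stdGaussian E =
      ∫ g, smoothedNorm B (y + A g) ∂stdGaussian E := by
  simp only [smoothedNorm]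
  rw [integral_integral_swap (integrable_norm_add_apply_prod B A y)]
  simp only [add_right_comm]

lemma integral_smoothedNorm_smul (A : E →L[ℝ] F) (y : F) (ε : ℝ) :
    ∫ g, smoothedNorm (ε • A) (y + A g) ∂stdGaussian E = smoothedNorm (√(1 + ε ^ 2) • A) y := by
  have hrotation := IsGaussian.map_rotation_eq_self_of_forall_strongDual_eq_zero
    (μ := stdGaussian E) (fun ℓ ↦ integral_strongDual_stdGaussian ℓ) (Real.arctan ε)
  have hfst : smoothedNorm (√(1 + ε ^ 2) • A) y = ∫ p : E × E, ‖y + (√(1 + ε ^ 2) • A) p.1‖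
      ∂(stdGaussian E).prod (stdGaussian E) := by
    rw [integral_fun_fst (fun g : E ↦ ‖y + (√(1 + ε ^ 2) • A) g‖)]
    simp [smoothedNorm]
  rw [integral_smoothedNorm_add_apply, hfst, ← hrotation, integral_map (by fun_prop)
    (by fun_prop : Continuous fun p : E × E ↦
      ‖y + (√(1 + ε ^ 2) • A) p.1‖).aestronglyMeasurable, hrotation]
  congr with p
  have hsqrt : √(1 + ε ^ 2) ≠ 0 := by positivity
  simp only [ContinuousLinearMap.rotation, ContinuousLinearMap.coe_mk', LinearMap.coe_mk,
    AddHom.coe_mk, Real.cos_arctan, Real.sin_arctan, _root_.smul_apply, map_add, map_smul,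
    smul_smul]
  rw [div_mul_cancel₀ _ hsqrt, div_mul_cancel₀ _ hsqrt, one_smul, add_assoc]

lemma integral_smoothedNorm_add_starProjection_le (A : E →L[ℝ] F) (L : Submodule ℝ E) (y : F)
    (ε : ℝ) :
    ∫ g, smoothedNorm A (y + (ε • A ∘L L.starProjection) g) ∂stdGaussian E ≤
      smoothedNorm A y + ε ^ 2 / 2 * smoothedNorm A 0 := by
  have hone : 1 ≤ √(1 + ε ^ 2) := Real.one_le_sqrt.2 (by linarith [sq_nonneg ε])
  have hsqrt : √(1 + ε ^ 2) - 1 ≤ ε ^ 2 / 2 := by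
    linarith [Real.sqrt_one_add_le (show -1 ≤ ε ^ 2 by linarith [sq_nonneg ε])]
  calc ∫ g, smoothedNorm A (y + (ε • A ∘L L.starProjection) g) ∂stdGaussian E
      = ∫ g, smoothedNorm ((ε • A) ∘L L.starProjection) (y + A g) ∂stdGaussian E := by
        rw [integral_smoothedNorm_comm, ContinuousLinearMap.smul_comp]
    _ ≤ ∫ g, smoothedNorm (ε • A) (y + A g) ∂stdGaussian E :=
        integral_mono (integrable_smoothedNorm_add_apply ..)
          (integrable_smoothedNorm_add_apply ..)
          fun g ↦ smoothedNorm_comp_starProjection_le _ L _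
    _ = smoothedNorm (√(1 + ε ^ 2) • A) y := integral_smoothedNorm_smul A y ε
    _ ≤ smoothedNorm A y + (√(1 + ε ^ 2) - 1) * smoothedNorm A 0 :=
        smoothedNorm_smul_left_le hone A y
    _ ≤ smoothedNorm A y + ε ^ 2 / 2 * smoothedNorm A 0 := by
        gcongr
        exact smoothedNorm_nonneg A 0

lemma integral_inner_sq_stdGaussian (u : E) :
    ∫ g, inner ℝ u g ^ 2 ∂stdGaussian E = ‖u‖ ^ 2 := by
  have h := covarianceBilin_apply (μ := stdGaussian E) IsGaussian.memLp_two_fun_id u u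
  rw [covarianceBilin_stdGaussian, innerSL_apply_apply, real_inner_self_eq_norm_sq,
    show ∫ x, id x ∂stdGaussian E = 0 from integral_id_stdGaussian] at h
  simpa [sq] using h.symm

lemma integral_norm_starProjection_sq (L : Submodule ℝ E) :
    ∫ g, ‖L.starProjection g‖ ^ 2 ∂stdGaussian E = Module.finrank ℝ L := by
  let b := stdOrthonormalBasis ℝ L
  have hexpand (g : E) : ‖L.starProjection g‖ ^ 2 = ∑ i, inner ℝ (b i : E) g ^ 2 := by
    rw [Submodule.starProjection_apply, ← Submodule.coe_norm, ← b.sum_sq_norm_inner_right]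
    refine Finset.sum_congr rfl fun i _ ↦ ?_
    rw [Submodule.inner_orthogonalProjectionOnto_eq_of_mem_left, Real.norm_eq_abs, sq_abs]
  have hintegrable (i) : Integrable (fun g ↦ inner ℝ (b i : E) g ^ 2) (stdGaussian E) :=
    (IsGaussian.memLp_two_fun_id.const_inner _).integrable_sq
  have hnorm (i) : ‖(b i : E)‖ = 1 := b.orthonormal.1 i
  simp only [hexpand, integral_finsetSum _ fun i _ ↦ hintegrable i,
    integral_inner_sq_stdGaussian, hnorm]
  simp

lemma integrable_norm_starProjection_pow (L : Submodule ℝ E) (k : ℕ) :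
    Integrable (fun g ↦ ‖L.starProjection g‖ ^ k) (stdGaussian E) := by
  have h : MemLp (fun g : E ↦ L.starProjection g) k (stdGaussian E) :=
    L.starProjection.comp_memLp' (IsGaussian.memLp_id _ _ (by simp))
  exact h.integrable_norm_pow'

-- The quartic correction makes the bound global, so that it can be integrated over `L`.
lemma quartic_le_second_difference (A : E →L[ℝ] F) (L : Submodule ℝ E) (y : F) {lam δ : ℝ}
    (hlam : 0 ≤ lam) (hδ : 0 < δ)
    (hquad : ∀ h ∈ L, ‖h‖ ≤ δ → 2 * lam * ‖h‖ ^ 2 ≤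
      smoothedNorm A (y + A h) + smoothedNorm A (y - A h) - 2 * smoothedNorm A y)
    {h : E} (hh : h ∈ L) :
    2 * lam * (‖h‖ ^ 2 - ‖h‖ ^ 4 / δ ^ 2) ≤
      smoothedNorm A (y + A h) + smoothedNorm A (y - A h) - 2 * smoothedNorm A y := by
  rcases le_or_gt ‖h‖ δ with hle | hgt
  · refine le_trans ?_ (hquad h hh hle)
    gcongr
    exact sub_le_self _ (by positivity)
  · refine le_trans (mul_nonpos_of_nonneg_of_nonpos (by positivity) ?_)
      (sub_nonneg.2 (two_mul_smoothedNorm_le A y (A h)))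
    rw [sub_nonpos, le_div_iff₀ (by positivity)]
    calc ‖h‖ ^ 2 * δ ^ 2 ≤ ‖h‖ ^ 2 * ‖h‖ ^ 2 := by gcongr
      _ = ‖h‖ ^ 4 := by ring

lemma integrable_second_difference (A : E →L[ℝ] F) (L : Submodule ℝ E) (y : F) (ε : ℝ) :
    Integrable (fun g ↦ smoothedNorm A (y + A (ε • L.starProjection g)) +
      smoothedNorm A (y - A (ε • L.starProjection g)) - 2 * smoothedNorm A y)
      (stdGaussian E) := by
  have h (ε : ℝ) := integrable_smoothedNorm_add_apply A (ε • A ∘L L.starProjection) y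
  refine (((h ε).add (h (-ε))).sub (integrable_const (2 * smoothedNorm A y))).congr
    (.of_forall fun g ↦ ?_)
  simp [sub_eq_add_neg]

lemma integral_second_difference_le (A : E →L[ℝ] F) (L : Submodule ℝ E) (y : F) (ε : ℝ) :
    ∫ g, (smoothedNorm A (y + A (ε • L.starProjection g)) +
      smoothedNorm A (y - A (ε • L.starProjection g)) - 2 * smoothedNorm A y) ∂stdGaussian E ≤
      ε ^ 2 * smoothedNorm A 0 := by
  have hintegrable (ε : ℝ) := integrable_smoothedNorm_add_apply A (ε • A ∘L L.starProjection) y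
  have hpos := integral_smoothedNorm_add_starProjection_le A L y ε
  have hneg := integral_smoothedNorm_add_starProjection_le A L y (-ε)
  have hsplit : ∫ g, (smoothedNorm A (y + A (ε • L.starProjection g)) +
      smoothedNorm A (y - A (ε • L.starProjection g)) - 2 * smoothedNorm A y) ∂stdGaussian E =
      ∫ g, smoothedNorm A (y + (ε • A ∘L L.starProjection) g) ∂stdGaussian E +
      ∫ g, smoothedNorm A (y + (-ε • A ∘L L.starProjection) g) ∂stdGaussian E -
        2 * smoothedNorm A y := by
    rw [← integral_add (hintegrable ε) (hintegrable (-ε))]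
    simpa [sub_eq_add_neg] using integral_sub ((hintegrable ε).add (hintegrable (-ε)))
      (integrable_const (2 * smoothedNorm A y))
  rw [hsplit]
  linarith

lemma two_mul_finrank_le_smoothedNorm_add (A : E →L[ℝ] F) (L : Submodule ℝ E) (y : F)
    {lam δ ε : ℝ} (hlam : 0 ≤ lam) (hδ : 0 < δ) (hε : 0 < ε)
    (hquad : ∀ h ∈ L, ‖h‖ ≤ δ → 2 * lam * ‖h‖ ^ 2 ≤
      smoothedNorm A (y + A h) + smoothedNorm A (y - A h) - 2 * smoothedNorm A y) :
    2 * lam * Module.finrank ℝ L ≤ smoothedNorm A 0 + ε ^ 2 *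
      (2 * lam * (∫ g, ‖L.starProjection g‖ ^ 4 ∂stdGaussian E) / δ ^ 2) := by
  have hsq := integrable_norm_starProjection_pow L 2
  have hquartic := (integrable_norm_starProjection_pow L 4).const_mul (ε ^ 2 / δ ^ 2)
  have hmean := integral_mono ((hsq.sub hquartic).const_mul (2 * lam * ε ^ 2))
    (integrable_second_difference A L y ε) fun g ↦ ?_
  · simp only [Pi.sub_apply] at hmean
    rw [integral_const_mul, integral_sub hsq hquartic, integral_const_mul,
      integral_norm_starProjection_sq] at hmean
    have h := hmean.trans (integral_second_difference_le A L y ε)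
    rw [mul_right_comm, mul_comm, mul_le_mul_iff_right₀ (by positivity)] at h
    linear_combination h
  · refine le_trans (le_of_eq ?_) (quartic_le_second_difference A L y hlam hδ hquad
      (L.smul_mem ε (L.starProjection_apply_mem g)))
    simp only [Pi.sub_apply, norm_smul, Real.norm_of_nonneg hε.le]
    ring

theorem two_mul_finrank_le_smoothedNorm (A : E →L[ℝ] F) (L : Submodule ℝ E) (y : F)
    {lam δ : ℝ} (hlam : 0 ≤ lam) (hδ : 0 < δ)
    (hquad : ∀ h ∈ L, ‖h‖ ≤ δ → 2 * lam * ‖h‖ ^ 2 ≤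
      smoothedNorm A (y + A h) + smoothedNorm A (y - A h) - 2 * smoothedNorm A y) :
    2 * lam * Module.finrank ℝ L ≤ smoothedNorm A 0 := by
  set K := 2 * lam * (∫ g, ‖L.starProjection g‖ ^ 4 ∂stdGaussian E) / δ ^ 2
  have hlimit : Filter.Tendsto (fun ε : ℝ ↦ smoothedNorm A 0 + ε ^ 2 * K) (nhdsWithin 0 (Set.Ioi 0))
      (nhds (smoothedNorm A 0)) :=
    tendsto_nhdsWithin_of_tendsto_nhds (Continuous.tendsto' (by fun_prop) _ _ (by simp))
  exact ge_of_tendsto hlimit (Filter.eventually_of_mem self_mem_nhdsWithin fun ε hε ↦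
    two_mul_finrank_le_smoothedNorm_add A L y hlam hδ hε hquad)

end SmoothedNorm

section PartialColoring

lemma finrank_add_le_finrank_inf_add {V : Type*} [AddCommGroup V] [Module ℝ V]
    [FiniteDimensional ℝ V] {H L M : Submodule ℝ V} (hH : H ≤ M) (hL : L ≤ M) :
    Module.finrank ℝ H + Module.finrank ℝ L ≤
      Module.finrank ℝ (H ⊓ L : Submodule ℝ V) + Module.finrank ℝ M := by
  rw [← Submodule.finrank_sup_add_finrank_inf_eq, add_comm]
  gcongr
  exact Submodule.finrank_mono (sup_le hH hL)

variable {κ : Type*}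

/-- The face through `x₀` of the cube `[-1, 1]^κ` in which only the coordinates in `S` vary. -/
def cubeFace (S : Finset κ) (x₀ : EuclideanSpace ℝ κ) : Set (EuclideanSpace ℝ κ) :=
  {x | (∀ i, |x i| ≤ 1) ∧ ∀ i ∉ S, x i = x₀ i}

/-- The coordinates in `S` at which `x` is not yet saturated, i.e. not a sign. -/
noncomputable def freeCoords (S : Finset κ) (x : EuclideanSpace ℝ κ) : Finset κ :=
  {i ∈ S | |x i| < 1}

lemma freeCoords_subset (S : Finset κ) (x : EuclideanSpace ℝ κ) : freeCoords S x ⊆ S :=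
  Finset.filter_subset _ _

lemma isCompact_cubeFace (S : Finset κ) (x₀ : EuclideanSpace ℝ κ) :
    IsCompact (cubeFace S x₀) := by
  have hcube : IsCompact {x : EuclideanSpace ℝ κ | ∀ i, |x i| ≤ 1} := by
    have h := (PiLp.homeomorph 2 fun _ : κ ↦ ℝ).isCompact_preimage.2
      (isCompact_univ_pi fun _ ↦ isCompact_Icc (a := (-1 : ℝ)) (b := 1))
    convert h using 1
    ext x
    simp [abs_le, PiLp.homeomorph, Pi.le_def, forall_and]
  have hfixed : IsClosed {x : EuclideanSpace ℝ κ | ∀ i ∉ S, x i = x₀ i} := by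
    simp only [Set.ofPred_forall]
    exact isClosed_iInter fun i ↦ isClosed_iInter fun _ ↦ isClosed_eq (by fun_prop) (by fun_prop)
  exact hcube.inter_right hfixed

section

variable [DecidableEq κ]

/-- The subspace of the vectors supported on the set `S` of coordinates. -/
def coordSubspace (S : Finset κ) : Submodule ℝ (EuclideanSpace ℝ κ) :=
  Submodule.span ℝ (Set.range fun i : S ↦ EuclideanSpace.single (i : κ) (1 : ℝ))

lemma coordSubspace_mono {S S' : Finset κ} (h : S' ⊆ S) : coordSubspace S' ≤ coordSubspace S :=
  Submodule.span_mono (Set.range_subset_iff.2 fun i ↦ ⟨⟨i, h i.2⟩, rfl⟩)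

lemma apply_eq_zero_of_mem_coordSubspace {S : Finset κ} {y : EuclideanSpace ℝ κ}
    (hy : y ∈ coordSubspace S) {i : κ} (hi : i ∉ S) : y i = 0 := by
  induction hy using Submodule.span_induction with
  | mem y hy =>
    obtain ⟨j, rfl⟩ := hy
    have hij : i ≠ j := fun h ↦ hi (h ▸ j.2)
    simp [hij]
  | zero => rfl
  | add y z _ _ hy hz => simp [hy, hz]
  | smul c y _ hy => simp [hy]

lemma finrank_coordSubspace [Finite κ] (S : Finset κ) :
    Module.finrank ℝ (coordSubspace S) = S.card := by
  cases nonempty_fintype κ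
  have h := (EuclideanSpace.orthonormal_single (𝕜 := ℝ) (ι := κ)).comp ((↑) : S → κ)
    Subtype.val_injective
  exact (finrank_span_eq_card h.linearIndependent).trans (Fintype.card_coe S)

end

variable [Fintype κ]

lemma norm_sq_sub_norm_sq_le_card {S : Finset κ} {x₀ x : EuclideanSpace ℝ κ}
    (hx : x ∈ cubeFace S x₀) : ‖x‖ ^ 2 - ‖x₀‖ ^ 2 ≤ S.card := by
  rw [EuclideanSpace.real_norm_sq_eq, EuclideanSpace.real_norm_sq_eq, ← Finset.sum_sub_distrib,
    ← Finset.sum_subset S.subset_univ fun i _ hi ↦ by simp [hx.2 i hi]]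
  calc ∑ i ∈ S, (x i ^ 2 - x₀ i ^ 2) ≤ ∑ i ∈ S, 1 := by
        gcongr with i
        linarith [(sq_le_one_iff_abs_le_one _).2 (hx.1 i), sq_nonneg (x₀ i)]
    _ = S.card := by simp

variable {F : Type*} [NormedAddCommGroup F] [NormedSpace ℝ F]

/-- The functional minimised by a partial coloring: the norm of `T x` smoothed along `H`, minus
a multiple of `‖x‖ ^ 2` rewarding saturated coordinates. -/
noncomputable def coloringEnergy (T : EuclideanSpace ℝ κ →L[ℝ] F)
    (H : Submodule ℝ (EuclideanSpace ℝ κ)) (lam : ℝ) (x : EuclideanSpace ℝ κ) : ℝ :=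
  smoothedNorm (T ∘L H.starProjection) (T x) - lam * ‖x‖ ^ 2

lemma norm_le_of_isMinOn_coloringEnergy {T : EuclideanSpace ℝ κ →L[ℝ] F}
    {H : Submodule ℝ (EuclideanSpace ℝ κ)} {lam : ℝ} (hlam : 0 ≤ lam) {S : Finset κ}
    {x₀ x : EuclideanSpace ℝ κ} (hx₀ : x₀ ∈ cubeFace S x₀) (hx : x ∈ cubeFace S x₀)
    (hmin : IsMinOn (coloringEnergy T H lam) (cubeFace S x₀) x) :
    ‖T x‖ ≤ ‖T x₀‖ + smoothedNorm (T ∘L H.starProjection) 0 + lam * S.card := by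
  set A := T ∘L H.starProjection
  have henergy : smoothedNorm A (T x) - lam * ‖x‖ ^ 2 ≤
      smoothedNorm A (T x₀) - lam * ‖x₀‖ ^ 2 := hmin hx₀
  have hreward := mul_le_mul_of_nonneg_left (norm_sq_sub_norm_sq_le_card hx) hlam
  have hstart := smoothedNorm_le_add_norm_sub A (T x₀) 0
  rw [sub_zero] at hstart
  linarith [norm_le_smoothedNorm A (T x)]

variable [DecidableEq κ]

lemma exists_pos_forall_add_mem_cubeFace {S : Finset κ} {x₀ x : EuclideanSpace ℝ κ}
    (hx : x ∈ cubeFace S x₀) :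
    ∃ δ > 0, ∀ h ∈ coordSubspace (freeCoords S x), ‖h‖ ≤ δ → x + h ∈ cubeFace S x₀ := by
  have hmargin : ∀ᶠ δ in nhdsWithin (0 : ℝ) (Set.Ioi 0), ∀ i ∈ freeCoords S x, δ < 1 - |x i| := by
    refine (Filter.eventually_all_finset _).2 fun i hi ↦ ?_
    exact nhdsWithin_le_nhds (eventually_lt_nhds (sub_pos.2 (Finset.mem_filter.1 hi).2))
  obtain ⟨δ, hδ, hδpos⟩ := (hmargin.and self_mem_nhdsWithin).exists
  refine ⟨δ, hδpos, fun h hmem hnorm ↦ ⟨fun i ↦ ?_, fun i hi ↦ ?_⟩⟩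
  · rw [PiLp.add_apply]
    by_cases hi : i ∈ freeCoords S x
    · have hcoord : |h i| ≤ ‖h‖ := PiLp.norm_apply_le h i
      linarith [abs_add_le (x i) (h i), hδ i hi]
    · rw [apply_eq_zero_of_mem_coordSubspace hmem hi, add_zero]
      exact hx.1 i
  · have hfree : i ∉ freeCoords S x := fun hfree ↦ hi (freeCoords_subset S x hfree)
    rw [PiLp.add_apply, apply_eq_zero_of_mem_coordSubspace hmem hfree, add_zero]
    exact hx.2 i hi

lemma two_mul_finrank_inf_freeCoords_le {T : EuclideanSpace ℝ κ →L[ℝ] F}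
    {H : Submodule ℝ (EuclideanSpace ℝ κ)} {lam : ℝ} (hlam : 0 ≤ lam) {S : Finset κ}
    {x₀ x : EuclideanSpace ℝ κ} (hx : x ∈ cubeFace S x₀)
    (hmin : IsMinOn (coloringEnergy T H lam) (cubeFace S x₀) x) :
    2 * lam * Module.finrank ℝ (H ⊓ coordSubspace (freeCoords S x) : Submodule ℝ _) ≤
      smoothedNorm (T ∘L H.starProjection) 0 := by
  obtain ⟨δ, hδ, hface⟩ := exists_pos_forall_add_mem_cubeFace hx
  refine two_mul_finrank_le_smoothedNorm _ _ (T x) hlam hδ fun h hmem hnorm ↦ ?_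
  have hproj : (T ∘L H.starProjection) h = T h := by
    rw [ContinuousLinearMap.comp_apply, Submodule.starProjection_eq_self_iff.2 hmem.1]
  have hplus := hmin (hface h hmem.2 hnorm)
  have hminus := hmin (hface (-h) (neg_mem hmem.2) (by rwa [norm_neg]))
  simp only [coloringEnergy, Set.mem_ofPred_eq, ← sub_eq_add_neg, map_add, map_sub]
    at hplus hminus
  rw [hproj]
  linear_combination hplus + hminus - lam * parallelogram_law_with_norm ℝ x h

theorem exists_partial_coloring (T : EuclideanSpace ℝ κ →L[ℝ] F) {x₀ : EuclideanSpace ℝ κ}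
    (hx₀ : ∀ i, |x₀ i| ≤ 1) {S : Finset κ} (hS : S.Nonempty)
    {H : Submodule ℝ (EuclideanSpace ℝ κ)} (hHS : H ≤ coordSubspace S)
    (hdim : 9 * S.card ≤ 10 * Module.finrank ℝ H) {R : ℝ} (hR : 0 < R)
    (hHR : smoothedNorm (T ∘L H.starProjection) 0 ≤ R) :
    ∃ x ∈ cubeFace S x₀, 2 * (freeCoords S x).card ≤ S.card ∧ ‖T x‖ ≤ ‖T x₀‖ + 3 * R := by
  have hcard : (0 : ℝ) < S.card := mod_cast hS.card_pos
  set lam := 2 * R / S.card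
  have hlam : 0 ≤ lam := by positivity
  have hlam_card : lam * S.card = 2 * R := div_mul_cancel₀ _ hcard.ne'
  have hmem₀ : x₀ ∈ cubeFace S x₀ := ⟨hx₀, fun _ _ ↦ rfl⟩
  have hcontinuous : Continuous (coloringEnergy T H lam) :=
    ((continuous_smoothedNorm _).comp T.continuous).sub (by fun_prop)
  obtain ⟨x, hx, hmin⟩ :=
    (isCompact_cubeFace S x₀).exists_isMinOn ⟨x₀, hmem₀⟩ hcontinuous.continuousOn
  refine ⟨x, hx, ?_, ?_⟩
  · by_contra! hfree
    have hinter := finrank_add_le_finrank_inf_add hHS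
      (coordSubspace_mono (freeCoords_subset S x))
    rw [finrank_coordSubspace, finrank_coordSubspace] at hinter
    set r := Module.finrank ℝ (H ⊓ coordSubspace (freeCoords S x) : Submodule ℝ _)
    have hr : (4 : ℝ) * S.card ≤ 10 * r := mod_cast (by omega : 4 * S.card ≤ 10 * r)
    have hsecond := two_mul_finrank_inf_freeCoords_le hlam hx hmin
    nlinarith [mul_le_mul_of_nonneg_left hr hlam]
  · linarith [norm_le_of_isMinOn_coloringEnergy hlam hmem₀ hx hmin]

theorem exists_full_coloring (T : EuclideanSpace ℝ κ →L[ℝ] F) {R : ℕ → ℝ} {ρ : ℝ} (hρ : ρ < 1)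
    (hR₀ : 0 ≤ R 0) (hRpos : ∀ m, 0 < m → 0 < R m)
    (hhalf : ∀ m m', 2 * m' ≤ m → R m' ≤ ρ * R m)
    (hsubspace : ∀ S : Finset κ, S.Nonempty → ∃ H ≤ coordSubspace S,
      9 * S.card ≤ 10 * Module.finrank ℝ H ∧ smoothedNorm (T ∘L H.starProjection) 0 ≤ R S.card)
    (S : Finset κ) (x₀ : EuclideanSpace ℝ κ) (hx₀ : ∀ i, |x₀ i| ≤ 1)
    (hsaturated : ∀ i ∉ S, |x₀ i| = 1) :
    ∃ x : EuclideanSpace ℝ κ, (∀ i, |x i| = 1) ∧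
      ‖T x‖ ≤ ‖T x₀‖ + 3 / (1 - ρ) * R S.card := by
  have hgap : 0 < 1 - ρ := sub_pos.2 hρ
  induction hm : S.card using Nat.strong_induction_on generalizing S x₀ with
  | _ m ih =>
    subst hm
    rcases S.eq_empty_or_nonempty with rfl | hS
    · refine ⟨x₀, fun i ↦ hsaturated i (by simp), ?_⟩
      have : 0 ≤ 3 / (1 - ρ) * R 0 := by positivity
      simpa using this
    obtain ⟨H, hHS, hdim, hHR⟩ := hsubspace S hS
    obtain ⟨x, hx, hfree, hnorm⟩ :=
      exists_partial_coloring T hx₀ hS hHS hdim (hRpos _ hS.card_pos) hHR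
    have hsaturated' : ∀ i ∉ freeCoords S x, |x i| = 1 := by
      intro i hi
      by_cases hiS : i ∈ S
      · exact le_antisymm (hx.1 i) (not_lt.1 fun h ↦ hi (Finset.mem_filter.2 ⟨hiS, h⟩))
      · rw [hx.2 i hiS, hsaturated i hiS]
    have hpos := hS.card_pos
    obtain ⟨z, hz, hznorm⟩ := ih (freeCoords S x).card (by omega) _ x hx.1 hsaturated' rfl
    refine ⟨z, hz, ?_⟩
    calc ‖T z‖ ≤ ‖T x‖ + 3 / (1 - ρ) * R (freeCoords S x).card := hznorm
      _ ≤ ‖T x₀‖ + 3 * R S.card + 3 / (1 - ρ) * (ρ * R S.card) := by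
        gcongr
        exact hhalf _ _ hfree
      _ = ‖T x₀‖ + 3 / (1 - ρ) * R S.card := by
        field_simp
        ring

end PartialColoring

section VarianceBounds

open Matrix

lemma frobNormSq_eq_trace {m n : Type*} [Fintype m] [Fintype n] (M : Matrix m n ℝ) :
    frobNormSq M = (Mᵀ * M).trace := by
  simp only [frobNormSq, Matrix.trace, diag_apply, mul_apply, transpose_apply, ← sq]
  exact Finset.sum_comm

lemma frobNormSq_nonneg {m n : Type*} [Fintype m] [Fintype n] (M : Matrix m n ℝ) :
    0 ≤ frobNormSq M :=
  Finset.sum_nonneg fun _ _ ↦ Finset.sum_nonneg fun _ _ ↦ sq_nonneg _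

lemma abs_prod_pow_le_sum_pow {α : Type*} [Fintype α] [Nonempty α] (a : α → ℝ) (p : α → ℕ)
    (hp : Even (∑ i, p i)) : |∏ i, a i ^ p i| ≤ ∑ i, a i ^ ∑ j, p j := by
  obtain ⟨i, -, hi⟩ := Finset.exists_max_image Finset.univ (fun i ↦ |a i|) Finset.univ_nonempty
  calc |∏ j, a j ^ p j| = ∏ j, |a j| ^ p j := by simp only [Finset.abs_prod, abs_pow]
    _ ≤ ∏ j, |a i| ^ p j :=
        Finset.prod_le_prod (fun j _ ↦ by positivity) fun j hj ↦ by
          exact pow_le_pow_left₀ (abs_nonneg _) (hi j hj) _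
    _ = a i ^ ∑ j, p j := by rw [Finset.prod_pow_eq_pow_sum, hp.pow_abs]
    _ ≤ ∑ j, a j ^ ∑ j, p j :=
        Finset.single_le_sum (fun j _ ↦ hp.pow_nonneg (a j)) (Finset.mem_univ i)

lemma pow_mul_pow_le_add {p q : ℕ} (hpq : Even (p + q)) (a b : ℝ) :
    a ^ p * b ^ q ≤ a ^ (p + q) + b ^ (p + q) := by
  have h := abs_prod_pow_le_sum_pow ![a, b] ![p, q] (by simpa using hpq)
  simp only [Fin.prod_univ_two, Fin.sum_univ_two, cons_val_zero, cons_val_one] at h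
  exact (le_abs_self _).trans h

lemma sum_fin_four {ι M : Type*} [Fintype ι] [AddCommMonoid M] (f : (Fin 4 → ι) → M) :
    ∑ t, f t = ∑ a, ∑ b, ∑ c, ∑ d, f ![a, b, c, d] := by
  simp only [← (Fin.consEquiv fun _ ↦ ι).sum_comp, Fintype.sum_prod_type, Fintype.sum_unique]
  rfl

variable {ι κ : Type*} [Fintype ι] [Fintype κ] {B : κ → Matrix ι ι ℝ} {s w : ℝ}

/-- Variance parameters of the Gaussian matrix `∑ k, g k • B k` with symmetric coefficients:
`s` bounds its variance `‖∑ k, B k ^ 2‖`, and `w` bounds the norm of its covariance, seen as a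
quadratic form on matrices with the Frobenius norm. -/
structure VarianceBounds (B : κ → Matrix ι ι ℝ) (s w : ℝ) : Prop where
  isSymm : ∀ k, (B k).IsSymm
  variance_nonneg : 0 ≤ s
  covariance_nonneg : 0 ≤ w
  sum_frobNormSq_mul_le : ∀ M : Matrix ι ι ℝ, ∑ k, frobNormSq (B k * M) ≤ s * frobNormSq M
  sum_trace_sq_le : ∀ M : Matrix ι ι ℝ, ∑ k, (Mᵀ * B k).trace ^ 2 ≤ w * frobNormSq M

lemma exists_diagonalization [DecidableEq ι] {X : Matrix ι ι ℝ} (hX : X.IsSymm) :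
    ∃ φ : Matrix ι ι ℝ ≃ₐ[ℝ] Matrix ι ι ℝ, (∀ M, (φ M).trace = M.trace) ∧
      (∀ M, (φ M)ᵀ = φ Mᵀ) ∧ (∀ M, opNorm (φ M) = opNorm M) ∧
      ∃ x : ι → ℝ, φ X = diagonal x := by
  have hherm : X.IsHermitian := by
    rw [IsHermitian, conjTranspose_eq_transpose_of_trivial, hX.eq]
  set U := star hherm.eigenvectorUnitary
  refine ⟨(Unitary.conjStarAlgAut ℝ (Matrix ι ι ℝ) U).toAlgEquiv, fun M ↦ ?_, fun M ↦ ?_,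
    fun M ↦ ?_, hherm.eigenvalues, hherm.conjStarAlgAut_star_eigenvectorUnitary⟩
  · change (Unitary.conjStarAlgAut ℝ (Matrix ι ι ℝ) U M).trace = M.trace
    rw [Unitary.conjStarAlgAut_apply, Matrix.trace_mul_comm, ← mul_assoc,
      Unitary.coe_star_mul_self, one_mul]
  · have hstar := map_star (Unitary.conjStarAlgAut ℝ (Matrix ι ι ℝ) U) M
    simp only [star_eq_conjTranspose, conjTranspose_eq_transpose_of_trivial] at hstar
    exact hstar.symm
  · open scoped Matrix.Norms.L2Operator in
    exact (CStarRing.norm_mul_coe_unitary _ (star U)).trans (CStarRing.norm_coe_unitary_mul U M)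

/-- The covariance `∑ k, B k a b * B k c d` of the `(a, b)` and `(c, d)` entries of the Gaussian
matrix `∑ k, g k • B k`, where `(a, b, c, d)` are the values of `t`. Indexing it by functions on
`Fin 4` turns its symmetries into permutations of `Fin 4`. -/
def covarianceTensor (B : κ → Matrix ι ι ℝ) (t : Fin 4 → ι) : ℝ :=
  ∑ k, B k (t 0) (t 1) * B k (t 2) (t 3)

namespace VarianceBounds

lemma apply_comm (h : VarianceBounds B s w) (k : κ) (a b : ι) : B k a b = B k b a :=
  (h.isSymm k).apply b a

lemma map [DecidableEq ι] (h : VarianceBounds B s w) (φ : Matrix ι ι ℝ ≃ₐ[ℝ] Matrix ι ι ℝ)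
    (htrace : ∀ M, (φ M).trace = M.trace) (htranspose : ∀ M, (φ M)ᵀ = φ Mᵀ) :
    VarianceBounds (fun k ↦ φ (B k)) s w where
  isSymm k := by rw [IsSymm, htranspose, (h.isSymm k).eq]
  variance_nonneg := h.variance_nonneg
  covariance_nonneg := h.covariance_nonneg
  sum_frobNormSq_mul_le M := by
    obtain ⟨N, rfl⟩ := φ.surjective M
    simpa only [frobNormSq_eq_trace, ← map_mul, htranspose, htrace] using
      h.sum_frobNormSq_mul_le N
  sum_trace_sq_le M := by
    obtain ⟨N, rfl⟩ := φ.surjective M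
    simpa only [frobNormSq_eq_trace, ← map_mul, htranspose, htrace] using h.sum_trace_sq_le N

lemma sum_row_sq_le (h : VarianceBounds B s w) (a : ι) : ∑ b, ∑ k, B k a b ^ 2 ≤ s := by
  classical
  have hsingle := h.sum_frobNormSq_mul_le (single a a 1)
  have hrow (k : κ) : frobNormSq (B k * single a a 1) = ∑ b, B k a b ^ 2 := by
    rw [frobNormSq]
    refine Finset.sum_congr rfl fun b _ ↦ ?_
    rw [Finset.sum_eq_single_of_mem a (Finset.mem_univ a) fun c _ hc ↦ by
      rw [mul_single_apply_of_ne _ _ _ _ _ hc, zero_pow two_ne_zero],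
      mul_single_apply_same, mul_one, h.apply_comm]
  have hone : frobNormSq (single a a (1 : ℝ)) = 1 := by
    simp [frobNormSq, single_apply, ite_and]
  rw [Finset.sum_comm]
  simpa only [hrow, hone, mul_one] using hsingle

lemma sum_sq_mul_le (h : VarianceBounds B s w) {y : ι → ℝ} (hy : ∀ a, 0 ≤ y a) :
    ∑ a, ∑ b, (∑ k, B k a b ^ 2) * y a ≤ s * ∑ a, y a := by
  simp only [Finset.mul_sum, ← Finset.sum_mul]
  exact Finset.sum_le_sum fun a _ ↦ mul_le_mul_of_nonneg_right (h.sum_row_sq_le a) (hy a)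

lemma sum_sq_mul_swap (h : VarianceBounds B s w) (f : ι → ι → ℝ) :
    ∑ a, ∑ b, (∑ k, B k a b ^ 2) * f a b = ∑ a, ∑ b, (∑ k, B k a b ^ 2) * f b a := by
  rw [Finset.sum_comm]
  simp only [fun k a b ↦ h.apply_comm k b a]

section Diagonal

variable [DecidableEq ι]

lemma sum_trace_diagonal (h : VarianceBounds B s w) (x : ι → ℝ) (p q : ℕ) :
    ∑ k, (B k * diagonal x ^ p * B k * diagonal x ^ q).trace =
      ∑ a, ∑ b, (∑ k, B k a b ^ 2) * (x b ^ p * x a ^ q) := by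
  have htrace (k : κ) : (B k * diagonal x ^ p * B k * diagonal x ^ q).trace =
      ∑ a, ∑ b, B k a b ^ 2 * (x b ^ p * x a ^ q) := by
    refine Finset.sum_congr rfl fun a _ ↦ ?_
    rw [diag_apply, diagonal_pow, diagonal_pow, mul_diagonal, mul_apply, Finset.sum_mul]
    refine Finset.sum_congr rfl fun b _ ↦ ?_
    rw [mul_diagonal, h.apply_comm k b a, Pi.pow_apply, Pi.pow_apply]
    ring
  simp only [htrace, Finset.sum_mul]
  rw [Finset.sum_comm]
  exact Finset.sum_congr rfl fun a _ ↦ Finset.sum_comm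

lemma sum_trace_diagonal_le (h : VarianceBounds B s w) (x : ι → ℝ) {p q : ℕ}
    (hpq : Even (p + q)) :
    ∑ k, (B k * diagonal x ^ p * B k * diagonal x ^ q).trace ≤
      2 * s * (diagonal x ^ (p + q)).trace := by
  have hweight := h.sum_sq_mul_le fun a ↦ hpq.pow_nonneg (x a)
  have hswap := h.sum_sq_mul_swap fun a _ ↦ x a ^ (p + q)
  calc ∑ k, (B k * diagonal x ^ p * B k * diagonal x ^ q).trace
      = ∑ a, ∑ b, (∑ k, B k a b ^ 2) * (x b ^ p * x a ^ q) := h.sum_trace_diagonal x p q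
    _ ≤ ∑ a, ∑ b, (∑ k, B k a b ^ 2) * (x b ^ (p + q) + x a ^ (p + q)) := by
        gcongr
        exact pow_mul_pow_le_add hpq _ _
    _ = 2 * ∑ a, ∑ b, (∑ k, B k a b ^ 2) * x a ^ (p + q) := by
        simp only [mul_add, Finset.sum_add_distrib, two_mul, hswap]
    _ ≤ 2 * s * ∑ a, x a ^ (p + q) := by linarith
    _ = 2 * s * (diagonal x ^ (p + q)).trace := by simp [diagonal_pow]

lemma sum_trace_diagonal_add_two_le (h : VarianceBounds B s w) (x : ι → ℝ) {p q : ℕ}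
    (hpq : Even (p + q)) :
    ∑ k, (B k * diagonal x ^ (p + 2) * B k * diagonal x ^ (q + 2)).trace ≤
      2 * ∑ k, (B k * diagonal x ^ 2 * B k * diagonal x ^ (p + q + 2)).trace := by
  have hswap := h.sum_sq_mul_swap fun a b ↦ x b ^ 2 * x a ^ (p + q + 2)
  calc ∑ k, (B k * diagonal x ^ (p + 2) * B k * diagonal x ^ (q + 2)).trace
      = ∑ a, ∑ b, (∑ k, B k a b ^ 2) * (x a ^ 2 * x b ^ 2 * (x b ^ p * x a ^ q)) := by
        rw [h.sum_trace_diagonal]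
        exact Finset.sum_congr rfl fun a _ ↦ Finset.sum_congr rfl fun b _ ↦ by ring
    _ ≤ ∑ a, ∑ b, (∑ k, B k a b ^ 2) *
          (x a ^ 2 * x b ^ 2 * (x b ^ (p + q) + x a ^ (p + q))) := by
        gcongr
        exact pow_mul_pow_le_add hpq _ _
    _ = ∑ a, ∑ b, (∑ k, B k a b ^ 2) * (x a ^ 2 * x b ^ (p + q + 2)) +
          ∑ a, ∑ b, (∑ k, B k a b ^ 2) * (x b ^ 2 * x a ^ (p + q + 2)) := by
        simp only [← Finset.sum_add_distrib]
        exact Finset.sum_congr rfl fun a _ ↦ Finset.sum_congr rfl fun b _ ↦ by ring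
    _ = 2 * ∑ k, (B k * diagonal x ^ 2 * B k * diagonal x ^ (p + q + 2)).trace := by
        rw [← hswap, h.sum_trace_diagonal, two_mul]

end Diagonal

lemma sum_sum_covarianceTensor_sq_le (h : VarianceBounds B s w) (a b : ι) :
    ∑ c, ∑ d, covarianceTensor B ![a, b, c, d] ^ 2 ≤ w * ∑ k, B k a b ^ 2 := by
  set M : Matrix ι ι ℝ := ∑ k, B k a b • B k with hM
  have hentry (c d : ι) : covarianceTensor B ![a, b, c, d] = M c d := by
    simp [M, Matrix.sum_apply, covarianceTensor]
  simp only [hentry]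
  change frobNormSq M ≤ _
  have hnorm : frobNormSq M = ∑ k, B k a b * (Mᵀ * B k).trace := by
    rw [frobNormSq_eq_trace]
    nth_rw 2 [hM]
    simp only [Matrix.mul_sum, Matrix.mul_smul, trace_sum, trace_smul, smul_eq_mul]
  have hcauchy := Finset.sum_mul_sq_le_sq_mul_sq Finset.univ (fun k ↦ B k a b)
    (fun k ↦ (Mᵀ * B k).trace)
  rw [← hnorm] at hcauchy
  have hsq : frobNormSq M * frobNormSq M ≤ (w * ∑ k, B k a b ^ 2) * frobNormSq M := by
    have hmul := mul_le_mul_of_nonneg_left (h.sum_trace_sq_le M)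
      (Finset.sum_nonneg fun k (_ : k ∈ Finset.univ) ↦ sq_nonneg (B k a b))
    linarith
  rcases (frobNormSq_nonneg M).eq_or_lt with hzero | hpos
  · rw [← hzero]
    exact mul_nonneg h.covariance_nonneg (Finset.sum_nonneg fun k _ ↦ sq_nonneg _)
  · exact le_of_mul_le_mul_right hsq hpos

lemma sum_mul_covarianceTensor_sq_le (h : VarianceBounds B s w) {y : ι → ℝ} (hy : ∀ a, 0 ≤ y a)
    (i : Fin 4) : ∑ t, y (t i) * covarianceTensor B t ^ 2 ≤ w * s * ∑ a, y a := by
  obtain ⟨σ, rfl, hσ⟩ : ∃ σ : Equiv.Perm (Fin 4), σ 0 = i ∧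
      ∀ t, covarianceTensor B (t ∘ σ) = covarianceTensor B t := by
    fin_cases i
    · exact ⟨1, rfl, fun t ↦ rfl⟩
    · refine ⟨Equiv.swap 0 1, rfl, fun t ↦ Finset.sum_congr rfl fun k _ ↦ ?_⟩
      rw [h.apply_comm k (t 0)]; rfl
    · refine ⟨Equiv.swap 0 2 * Equiv.swap 1 3, rfl, fun t ↦ Finset.sum_congr rfl fun k _ ↦ ?_⟩
      exact mul_comm _ _
    · refine ⟨Equiv.swap 0 3 * Equiv.swap 1 2, rfl, fun t ↦ Finset.sum_congr rfl fun k _ ↦ ?_⟩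
      rw [h.apply_comm k (t 0), h.apply_comm k (t 2), mul_comm]; rfl
  calc ∑ t : Fin 4 → ι, y (t (σ 0)) * covarianceTensor B t ^ 2
      = ∑ t : Fin 4 → ι, y ((t ∘ σ) 0) * covarianceTensor B (t ∘ σ) ^ 2 := by simp only [hσ]; rfl
    _ = ∑ t : Fin 4 → ι, y (t 0) * covarianceTensor B t ^ 2 :=
        (σ.symm.arrowCongr (Equiv.refl ι)).sum_comp fun t ↦ y (t 0) * covarianceTensor B t ^ 2
    _ = ∑ a, ∑ b, y a * ∑ c, ∑ d, covarianceTensor B ![a, b, c, d] ^ 2 := by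
        simp only [sum_fin_four, cons_val_zero, Finset.mul_sum]
    _ ≤ ∑ a, ∑ b, y a * (w * ∑ k, B k a b ^ 2) := by
        gcongr with a _ b _
        · exact hy a
        · exact h.sum_sum_covarianceTensor_sq_le a b
    _ = w * ∑ a, ∑ b, (∑ k, B k a b ^ 2) * y a := by
        simp only [Finset.mul_sum, Finset.sum_mul]
        congr! 3
        ring
    _ ≤ w * (s * ∑ a, y a) := by
        gcongr
        · exact h.covariance_nonneg
        · exact h.sum_sq_mul_le hy
    _ = w * s * ∑ a, y a := by ring

lemma sum_mul_covarianceTensor_rotate_sq_le (h : VarianceBounds B s w) {y : ι → ℝ}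
    (hy : ∀ a, 0 ≤ y a) (i : Fin 4) :
    ∑ t, y (t i) * covarianceTensor B (t ∘ finRotate 4) ^ 2 ≤ w * s * ∑ a, y a := by
  calc ∑ t : Fin 4 → ι, y (t i) * covarianceTensor B (t ∘ finRotate 4) ^ 2
      = ∑ t : Fin 4 → ι, y ((t ∘ finRotate 4) ((finRotate 4).symm i)) *
          covarianceTensor B (t ∘ finRotate 4) ^ 2 := by
        simp only [Function.comp_apply, Equiv.apply_symm_apply]
    _ = ∑ t : Fin 4 → ι, y (t ((finRotate 4).symm i)) * covarianceTensor B t ^ 2 :=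
        ((finRotate 4).symm.arrowCongr (Equiv.refl ι)).sum_comp fun t ↦
          y (t ((finRotate 4).symm i)) * covarianceTensor B t ^ 2
    _ ≤ w * s * ∑ a, y a := h.sum_mul_covarianceTensor_sq_le hy _

section Diagonal

variable [DecidableEq ι]

lemma sum_trace_diagonal_crossing (x : ι → ℝ) (p q : ℕ) :
    ∑ k, ∑ j, (B k * B j * diagonal x * B k * diagonal x ^ p * B j * diagonal x ^ q).trace =
      ∑ t, x (t 2) * x (t 3) ^ p * x (t 0) ^ q *
        (covarianceTensor B t * covarianceTensor B (t ∘ finRotate 4)) := by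
  have htrace (k j : κ) :
      (B k * B j * diagonal x * B k * diagonal x ^ p * B j * diagonal x ^ q).trace =
        ∑ t : Fin 4 → ι, x (t 2) * x (t 3) ^ p * x (t 0) ^ q *
          ((B k (t 0) (t 1) * B k (t 2) (t 3)) * (B j (t 1) (t 2) * B j (t 3) (t 0))) := by
    have hpow_mul (r : ℕ) (M : Matrix ι ι ℝ) (a b : ι) :
        (diagonal x ^ r * M) a b = x a ^ r * M a b := by
      rw [diagonal_pow, diagonal_mul, Pi.pow_apply]
    have hmul_pow (a b : ι) : (B j * diagonal x ^ q) a b = B j a b * x b ^ q := by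
      rw [diagonal_pow, mul_diagonal, Pi.pow_apply]
    simp only [sum_fin_four, Matrix.trace, diag_apply, mul_assoc, mul_apply (M := B k), hpow_mul,
      mul_apply (M := B j) (N := diagonal x * _), diagonal_mul, hmul_pow, Finset.mul_sum,
      cons_val_zero, cons_val_one, cons_val]
    congr! 4
    ring
  have hrotate (t : Fin 4 → ι) : covarianceTensor B (t ∘ finRotate 4) =
      ∑ j, B j (t 1) (t 2) * B j (t 3) (t 0) := rfl
  simp only [htrace, hrotate]
  simp only [covarianceTensor, Finset.sum_mul_sum]
  simp only [Finset.mul_sum]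
  rw [Finset.sum_congr rfl fun k _ ↦ Finset.sum_comm, Finset.sum_comm]

lemma sum_trace_diagonal_crossing_le (h : VarianceBounds B s w) (x : ι → ℝ) {p q : ℕ}
    (hpq : Even (1 + p + q)) :
    ∑ k, ∑ j, (B k * B j * diagonal x * B k * diagonal x ^ p * B j * diagonal x ^ q).trace ≤
      3 * (w * s) * (diagonal x ^ (1 + p + q)).trace := by
  set y : ι → ℝ := fun a ↦ x a ^ (1 + p + q)
  have hy (a : ι) : 0 ≤ y a := hpq.pow_nonneg _
  have hbound (t : Fin 4 → ι) : x (t 2) * x (t 3) ^ p * x (t 0) ^ q *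
      (covarianceTensor B t * covarianceTensor B (t ∘ finRotate 4)) ≤
      (y (t 2) + y (t 3) + y (t 0)) *
        ((covarianceTensor B t ^ 2 + covarianceTensor B (t ∘ finRotate 4) ^ 2) / 2) := by
    have hpow := abs_prod_pow_le_sum_pow ![x (t 2), x (t 3), x (t 0)] ![1, p, q]
      (by simpa [Fin.sum_univ_three] using hpq)
    simp only [Fin.prod_univ_three, Fin.sum_univ_three, cons_val_zero, cons_val_one, cons_val,
      pow_one] at hpow
    refine (le_abs_self _).trans ?_
    rw [abs_mul]
    refine mul_le_mul hpow ?_ (abs_nonneg _) ((abs_nonneg _).trans hpow)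
    rw [abs_mul]
    nlinarith [two_mul_le_add_sq |covarianceTensor B t| |covarianceTensor B (t ∘ finRotate 4)|,
      sq_abs (covarianceTensor B t), sq_abs (covarianceTensor B (t ∘ finRotate 4))]
  have htensor := h.sum_mul_covarianceTensor_sq_le hy
  have hrotate := h.sum_mul_covarianceTensor_rotate_sq_le hy
  calc ∑ k, ∑ j, (B k * B j * diagonal x * B k * diagonal x ^ p * B j * diagonal x ^ q).trace
      ≤ ∑ t : Fin 4 → ι, (y (t 2) + y (t 3) + y (t 0)) *
        ((covarianceTensor B t ^ 2 + covarianceTensor B (t ∘ finRotate 4) ^ 2) / 2) := by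
        rw [sum_trace_diagonal_crossing]
        exact Finset.sum_le_sum fun t _ ↦ hbound t
    _ ≤ 3 * (w * s) * ∑ a, y a := by
        simp only [add_mul, ← mul_div_assoc, mul_add, add_div, Finset.sum_add_distrib,
          ← Finset.sum_div]
        linarith [htensor 0, htensor 2, htensor 3, hrotate 0, hrotate 2, hrotate 3]
    _ = 3 * (w * s) * (diagonal x ^ (1 + p + q)).trace := by simp [y, diagonal_pow]

end Diagonal

variable [DecidableEq ι] {X : Matrix ι ι ℝ}

theorem sum_trace_le (h : VarianceBounds B s w) (hX : X.IsSymm) {p q : ℕ}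
    (hpq : Even (p + q)) :
    ∑ k, (B k * X ^ p * B k * X ^ q).trace ≤ 2 * s * (X ^ (p + q)).trace := by
  obtain ⟨φ, htrace, htranspose, -, x, hx⟩ := exists_diagonalization hX
  simpa only [← hx, ← map_mul, ← map_pow, htrace] using
    (h.map φ htrace htranspose).sum_trace_diagonal_le x hpq

theorem sum_trace_add_two_le (h : VarianceBounds B s w) (hX : X.IsSymm) {p q : ℕ}
    (hpq : Even (p + q)) :
    ∑ k, (B k * X ^ (p + 2) * B k * X ^ (q + 2)).trace ≤
      2 * ∑ k, (B k * X ^ 2 * B k * X ^ (p + q + 2)).trace := by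
  obtain ⟨φ, htrace, htranspose, -, x, hx⟩ := exists_diagonalization hX
  simpa only [← hx, ← map_mul, ← map_pow, htrace] using
    (h.map φ htrace htranspose).sum_trace_diagonal_add_two_le x hpq

theorem sum_trace_nested_le (h : VarianceBounds B s w) (hX : X.IsSymm) {m : ℕ} (hm : Even m) :
    ∑ k, ∑ j, (B k * B j * B j * B k * X ^ m).trace ≤ s ^ 2 * (X ^ m).trace := by
  obtain ⟨r, rfl⟩ := hm
  have hpow : frobNormSq (X ^ r) = (X ^ (r + r)).trace := by
    rw [frobNormSq_eq_trace, transpose_pow, hX.eq, pow_add]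
  have hterm (k j : κ) : (B k * B j * B j * B k * X ^ (r + r)).trace =
      frobNormSq (B j * (B k * X ^ r)) := by
    rw [frobNormSq_eq_trace, transpose_mul, transpose_mul, (h.isSymm k).eq, (h.isSymm j).eq,
      transpose_pow, hX.eq, pow_add, ← mul_assoc, Matrix.trace_mul_comm]
    simp only [mul_assoc]
  calc ∑ k, ∑ j, (B k * B j * B j * B k * X ^ (r + r)).trace
      ≤ ∑ k, s * frobNormSq (B k * X ^ r) := by
        simp only [hterm]
        exact Finset.sum_le_sum fun k _ ↦ h.sum_frobNormSq_mul_le _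
    _ ≤ s * (s * frobNormSq (X ^ r)) := by
        rw [← Finset.mul_sum]
        exact mul_le_mul_of_nonneg_left (h.sum_frobNormSq_mul_le _) h.variance_nonneg
    _ = s ^ 2 * (X ^ (r + r)).trace := by rw [hpow]; ring

theorem sum_trace_crossing_le (h : VarianceBounds B s w) (hX : X.IsSymm) {p q : ℕ}
    (hpq : Even (1 + p + q)) :
    ∑ k, ∑ j, (B k * B j * X * B k * X ^ p * B j * X ^ q).trace ≤
      3 * (w * s) * (X ^ (1 + p + q)).trace := by
  obtain ⟨φ, htrace, htranspose, -, x, hx⟩ := exists_diagonalization hX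
  simpa only [← hx, ← map_mul, ← map_pow, htrace] using
    (h.map φ htrace htranspose).sum_trace_diagonal_crossing_le x hpq

end VarianceBounds

end VarianceBounds

section GaussianExpectation

lemma integrable_pow_gaussianReal (m : ℕ) :
    Integrable (fun x : ℝ ↦ x ^ m) (gaussianReal 0 1) := by
  refine (integrable_norm_iff (by fun_prop)).mp ?_
  simpa only [norm_pow, id] using
    (memLp_id_gaussianReal (μ := 0) (v := 1) (m : NNReal)).integrable_norm_pow' (p := m)

lemma integrable_pow_mul_gaussianPDFReal (m : ℕ) :
    Integrable fun x : ℝ ↦ x ^ m * gaussianPDFReal 0 1 x := by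
  have h := integrable_pow_gaussianReal m
  rw [gaussianReal, if_neg one_ne_zero, integrable_withDensity_iff (measurable_gaussianPDF _ _)
    (Filter.Eventually.of_forall fun _ ↦ gaussianPDF_lt_top)] at h
  simpa only [toReal_gaussianPDF] using h

lemma hasDerivAt_gaussianPDFReal (x : ℝ) :
    HasDerivAt (gaussianPDFReal 0 1) (-x * gaussianPDFReal 0 1 x) x := by
  have hexponent : HasDerivAt (fun x : ℝ ↦ -(x - 0) ^ 2 / (2 * ((1 : NNReal) : ℝ))) (-x) x := by
    refine ((((hasDerivAt_id x).sub_const 0).pow 2).neg.div_const _).congr_deriv ?_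
    simp only [Nat.cast_ofNat, id_eq, sub_zero, Nat.add_one_sub_one, pow_one, mul_one,
      NNReal.coe_one]
    ring
  rw [gaussianPDFReal_def]
  exact (hexponent.exp.const_mul _).congr_deriv (by ring)

lemma integral_pow_succ_gaussianReal (m : ℕ) :
    ∫ x, x ^ (m + 1) ∂gaussianReal 0 1 = m * ∫ x, x ^ (m - 1) ∂gaussianReal 0 1 := by
  have hderiv (x : ℝ) : HasDerivAt (fun x ↦ x ^ m * gaussianPDFReal 0 1 x)
      (m * (x ^ (m - 1) * gaussianPDFReal 0 1 x) - x ^ (m + 1) * gaussianPDFReal 0 1 x) x :=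
    ((hasDerivAt_pow m x).mul (hasDerivAt_gaussianPDFReal x)).congr_deriv (by ring)
  have hleft := integrable_pow_mul_gaussianPDFReal (m + 1)
  have hright := (integrable_pow_mul_gaussianPDFReal (m - 1)).const_mul (m : ℝ)
  have hzero := integral_eq_zero_of_hasDerivAt_of_integrable hderiv (hright.sub hleft)
    (integrable_pow_mul_gaussianPDFReal m)
  rw [integral_sub hright hleft, integral_const_mul, sub_eq_zero] at hzero
  simpa only [integral_gaussianReal_eq_integral_smul one_ne_zero, smul_eq_mul, mul_comm] using
    hzero.symm

variable {κ : Type*} [Fintype κ]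

lemma eval_monomial_eq_prod (x : κ → ℝ) (e : κ →₀ ℕ) (a : ℝ) :
    MvPolynomial.eval x (MvPolynomial.monomial e a) = a * ∏ i, x i ^ e i := by
  rw [MvPolynomial.eval_monomial, Finsupp.prod_fintype _ _ fun _ ↦ pow_zero _]

lemma integrable_eval_pi_gaussianReal (P : MvPolynomial κ ℝ) :
    Integrable (fun x ↦ MvPolynomial.eval x P) (Measure.pi fun _ ↦ gaussianReal 0 1) := by
  induction P using MvPolynomial.induction_on' with
  | monomial e a =>
    simp only [eval_monomial_eq_prod]
    exact (Integrable.fintype_prod fun i ↦ integrable_pow_gaussianReal (e i)).const_mul a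
  | add P Q hP hQ => simp only [map_add]; exact hP.add hQ

/-- Expectation of a polynomial in independent standard Gaussian variables. -/
noncomputable def gaussianExpectation : MvPolynomial κ ℝ →ₗ[ℝ] ℝ where
  toFun P := ∫ x, MvPolynomial.eval x P ∂Measure.pi fun _ ↦ gaussianReal 0 1
  map_add' P Q := by
    simp only [map_add]
    exact integral_add (integrable_eval_pi_gaussianReal P) (integrable_eval_pi_gaussianReal Q)
  map_smul' c P := by
    simp only [MvPolynomial.smul_eval, integral_const_mul, RingHom.id_apply, smul_eq_mul]

lemma gaussianExpectation_apply (P : MvPolynomial κ ℝ) :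
    gaussianExpectation P = ∫ x, MvPolynomial.eval x P ∂Measure.pi fun _ ↦ gaussianReal 0 1 :=
  rfl

lemma gaussianExpectation_mono {P Q : MvPolynomial κ ℝ}
    (hPQ : ∀ x, MvPolynomial.eval x P ≤ MvPolynomial.eval x Q) :
    gaussianExpectation P ≤ gaussianExpectation Q :=
  integral_mono (integrable_eval_pi_gaussianReal P) (integrable_eval_pi_gaussianReal Q) hPQ

lemma gaussianExpectation_monomial (e : κ →₀ ℕ) (a : ℝ) :
    gaussianExpectation (MvPolynomial.monomial e a) =
      a * ∏ i, ∫ x, x ^ e i ∂gaussianReal 0 1 := by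
  simp only [gaussianExpectation_apply, eval_monomial_eq_prod]
  rw [integral_const_mul, integral_fintype_prod_eq_prod (f := fun i (x : ℝ) ↦ x ^ e i)]

theorem gaussianExpectation_X_mul (k : κ) (P : MvPolynomial κ ℝ) :
    gaussianExpectation (MvPolynomial.X k * P) =
      gaussianExpectation (MvPolynomial.pderiv k P) := by
  classical
  induction P using MvPolynomial.induction_on' with
  | monomial e a =>
    have hother : ∀ i ∈ Finset.univ.erase k,
        ∫ x, x ^ (Finsupp.single k 1 + e : κ →₀ ℕ) i ∂gaussianReal 0 1 =
          ∫ x, x ^ (e - Finsupp.single k 1 : κ →₀ ℕ) i ∂gaussianReal 0 1 := fun i hi ↦ by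
      simp [(Finset.ne_of_mem_erase hi).symm]
    rw [MvPolynomial.pderiv_monomial, MvPolynomial.X, MvPolynomial.monomial_mul,
      gaussianExpectation_monomial, gaussianExpectation_monomial,
      ← Finset.mul_prod_erase _ _ (Finset.mem_univ k),
      ← Finset.mul_prod_erase _ _ (Finset.mem_univ k), Finset.prod_congr rfl hother]
    have hself := integral_pow_succ_gaussianReal (e k)
    simp only [Finsupp.add_apply, Finsupp.tsub_apply, Finsupp.single_eq_same, add_comm 1, hself]
    ring
  | add P Q hP hQ => rw [mul_add, map_add, hP, hQ, map_add, map_add]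

end GaussianExpectation

section TraceMoments

open Matrix
open scoped Finset

variable {κ ι : Type*}

/-- A real matrix, seen as a matrix of constant polynomials. -/
noncomputable def constMatrix (M : Matrix ι ι ℝ) : Matrix ι ι (MvPolynomial κ ℝ) :=
  M.map MvPolynomial.C

/-- The entrywise partial derivative of a matrix of polynomials. -/
noncomputable def matrixPDeriv (k : κ) (N : Matrix ι ι (MvPolynomial κ ℝ)) :
    Matrix ι ι (MvPolynomial κ ℝ) :=
  N.map (MvPolynomial.pderiv k)

/-- The generic linear combination `∑ k, X k • B k`, whose value at a standard Gaussian vector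
is the random matrix under study. -/
noncomputable def linearPencil [Fintype κ] (B : κ → Matrix ι ι ℝ) :
    Matrix ι ι (MvPolynomial κ ℝ) :=
  ∑ k, (MvPolynomial.X k : MvPolynomial κ ℝ) • constMatrix (B k)

lemma matrixPDeriv_constMatrix (k : κ) (M : Matrix ι ι ℝ) :
    matrixPDeriv k (constMatrix M) = 0 := by
  ext1 a b
  simp only [matrixPDeriv, constMatrix, map_apply, MvPolynomial.pderiv_C, Matrix.zero_apply]

lemma matrixPDeriv_linearPencil [Fintype κ] (k : κ) (B : κ → Matrix ι ι ℝ) :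
    matrixPDeriv k (linearPencil B) = constMatrix (B k) := by
  classical
  ext1 a b
  simp only [matrixPDeriv, linearPencil, constMatrix, map_apply, Matrix.sum_apply,
    Matrix.smul_apply, map_sum, smul_eq_mul, Derivation.leibniz, MvPolynomial.pderiv_C,
    MvPolynomial.pderiv_X, mul_zero, zero_add, Pi.single_apply, mul_ite, mul_one,
    Finset.sum_ite_eq', Finset.mem_univ, if_true]

lemma isSymm_sum_smul [Fintype κ] {B : κ → Matrix ι ι ℝ} (hB : ∀ k, (B k).IsSymm) (x : κ → ℝ) :
    (∑ k, x k • B k).IsSymm := by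
  simp only [IsSymm, transpose_sum, transpose_smul, (hB _).eq]

variable [Fintype ι]

lemma matrixPDeriv_mul (k : κ) (M N : Matrix ι ι (MvPolynomial κ ℝ)) :
    matrixPDeriv k (M * N) = matrixPDeriv k M * N + M * matrixPDeriv k N := by
  ext1 a b
  simp only [matrixPDeriv, map_apply, Matrix.add_apply, mul_apply, map_sum, Derivation.leibniz,
    smul_eq_mul, ← Finset.sum_add_distrib]
  exact Finset.sum_congr rfl fun c _ ↦ by ring

lemma pderiv_trace (k : κ) (N : Matrix ι ι (MvPolynomial κ ℝ)) :
    MvPolynomial.pderiv k N.trace = (matrixPDeriv k N).trace := by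
  simp only [Matrix.trace, diag_apply, map_sum, matrixPDeriv, map_apply]

theorem gaussianExpectation_trace_linearPencil_mul [Fintype κ] (B : κ → Matrix ι ι ℝ)
    (N : Matrix ι ι (MvPolynomial κ ℝ)) :
    gaussianExpectation (linearPencil B * N).trace =
      ∑ k, gaussianExpectation (constMatrix (B k) * matrixPDeriv k N).trace := by
  simp only [linearPencil, Finset.sum_mul, trace_sum, Matrix.smul_mul, trace_smul, smul_eq_mul,
    map_sum, gaussianExpectation_X_mul, pderiv_trace, matrixPDeriv_mul, matrixPDeriv_constMatrix,
    zero_mul, zero_add]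

variable [DecidableEq ι]

lemma eval_trace (x : κ → ℝ) (N : Matrix ι ι (MvPolynomial κ ℝ)) :
    MvPolynomial.eval x N.trace = ((MvPolynomial.eval x).mapMatrix N).trace :=
  AddMonoidHom.map_trace (MvPolynomial.eval x) N

lemma eval_constMatrix (x : κ → ℝ) (M : Matrix ι ι ℝ) :
    (MvPolynomial.eval x).mapMatrix (constMatrix M) = M := by
  ext a b
  simp only [constMatrix, RingHom.mapMatrix_apply, map_apply, MvPolynomial.eval_C]

variable [Fintype κ]

lemma eval_linearPencil (x : κ → ℝ) (B : κ → Matrix ι ι ℝ) :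
    (MvPolynomial.eval x).mapMatrix (linearPencil B) = ∑ k, x k • B k := by
  ext a b
  simp [linearPencil, constMatrix, Matrix.sum_apply]

lemma matrixPDeriv_linearPencil_pow (k : κ) (B : κ → Matrix ι ι ℝ) (r : ℕ) :
    matrixPDeriv k (linearPencil B ^ r) = ∑ a ∈ Finset.range r,
      linearPencil B ^ a * constMatrix (B k) * linearPencil B ^ (r - 1 - a) := by
  induction r with
  | zero =>
    ext1 a b
    simp [matrixPDeriv, one_apply, apply_ite]
  | succ r ih =>
    rw [pow_succ, matrixPDeriv_mul, ih, matrixPDeriv_linearPencil, Finset.sum_range_succ,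
      Finset.sum_mul, Nat.add_sub_cancel, Nat.sub_self, pow_zero, mul_one]
    refine congrArg (· + _) (Finset.sum_congr rfl fun a ha ↦ ?_)
    have hexponent : r - a = r - 1 - a + 1 := by have := Finset.mem_range.mp ha; omega
    rw [hexponent, pow_succ, mul_assoc _ _ (linearPencil B)]

/-- The expected trace of the `r`-th power of the Gaussian matrix `∑ k, g k • B k`. -/
noncomputable def traceMoment (B : κ → Matrix ι ι ℝ) (r : ℕ) : ℝ :=
  gaussianExpectation (linearPencil B ^ r).trace

/-- The mixed moment `∑ k, 𝔼 tr (B k * X ^ p * B k * X ^ q)` of the Gaussian matrix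
`X = ∑ k, g k • B k`. -/
noncomputable def sandwichMoment (B : κ → Matrix ι ι ℝ) (p q : ℕ) : ℝ :=
  gaussianExpectation (∑ k,
    (constMatrix (B k) * linearPencil B ^ p * constMatrix (B k) * linearPencil B ^ q).trace)

lemma traceMoment_zero (B : κ → Matrix ι ι ℝ) : traceMoment B 0 = Fintype.card ι := by
  simp [traceMoment, gaussianExpectation_apply]

lemma traceMoment_succ (B : κ → Matrix ι ι ℝ) (r : ℕ) :
    traceMoment B (r + 1) = ∑ a ∈ Finset.range r, sandwichMoment B a (r - 1 - a) := by
  simp only [traceMoment, sandwichMoment, pow_succ', gaussianExpectation_trace_linearPencil_mul,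
    matrixPDeriv_linearPencil_pow, Finset.mul_sum, trace_sum, map_sum, mul_assoc]
  exact Finset.sum_comm

lemma traceMoment_nonneg {B : κ → Matrix ι ι ℝ} (hB : ∀ k, (B k).IsSymm) {r : ℕ} (hr : Even r) :
    0 ≤ traceMoment B r := by
  obtain ⟨p, rfl⟩ := hr
  rw [traceMoment, ← map_zero (gaussianExpectation (κ := κ))]
  refine gaussianExpectation_mono fun x ↦ ?_
  have hpow : ((∑ k, x k • B k) ^ p)ᵀ = (∑ k, x k • B k) ^ p :=
    ((isSymm_sum_smul hB x).pow p).eq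
  rw [map_zero, eval_trace, map_pow, eval_linearPencil, pow_add]
  nth_rewrite 1 [← hpow]
  rw [← frobNormSq_eq_trace]
  exact frobNormSq_nonneg _

namespace VarianceBounds

variable {B : κ → Matrix ι ι ℝ} {s w : ℝ}

lemma sandwichMoment_le (h : VarianceBounds B s w) {p q : ℕ} (hpq : Even (p + q)) :
    sandwichMoment B p q ≤ 2 * s * traceMoment B (p + q) := by
  rw [traceMoment, ← smul_eq_mul, ← map_smul]
  refine gaussianExpectation_mono fun x ↦ ?_
  simpa only [map_sum, MvPolynomial.smul_eval, eval_trace, map_mul, map_pow, eval_constMatrix,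
    eval_linearPencil] using h.sum_trace_le (isSymm_sum_smul h.isSymm x) hpq

lemma sandwichMoment_add_two_le (h : VarianceBounds B s w) {p q : ℕ} (hpq : Even (p + q)) :
    sandwichMoment B (p + 2) (q + 2) ≤ 2 * sandwichMoment B 2 (p + q + 2) := by
  rw [sandwichMoment, sandwichMoment, ← smul_eq_mul, ← map_smul]
  refine gaussianExpectation_mono fun x ↦ ?_
  simpa only [map_sum, MvPolynomial.smul_eval, eval_trace, map_mul, map_pow, eval_constMatrix,
    eval_linearPencil] using h.sum_trace_add_two_le (isSymm_sum_smul h.isSymm x) hpq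

lemma gaussianExpectation_nested_le (h : VarianceBounds B s w) {m : ℕ} (hm : Even m) :
    gaussianExpectation (∑ k, ∑ j, (constMatrix (B k) * constMatrix (B j) * constMatrix (B j) *
      constMatrix (B k) * linearPencil B ^ m).trace) ≤ s ^ 2 * traceMoment B m := by
  rw [traceMoment, ← smul_eq_mul, ← map_smul]
  refine gaussianExpectation_mono fun x ↦ ?_
  simpa only [map_sum, MvPolynomial.smul_eval, eval_trace, map_mul, map_pow, eval_constMatrix,
    eval_linearPencil] using h.sum_trace_nested_le (isSymm_sum_smul h.isSymm x) hm

lemma gaussianExpectation_crossing_le (h : VarianceBounds B s w) {p q : ℕ}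
    (hpq : Even (1 + p + q)) :
    gaussianExpectation (∑ k, ∑ j, (constMatrix (B k) * constMatrix (B j) * linearPencil B *
      constMatrix (B k) * linearPencil B ^ p * constMatrix (B j) * linearPencil B ^ q).trace) ≤
      3 * (w * s) * traceMoment B (1 + p + q) := by
  rw [traceMoment, ← smul_eq_mul, ← map_smul]
  refine gaussianExpectation_mono fun x ↦ ?_
  simpa only [map_sum, MvPolynomial.smul_eval, eval_trace, map_mul, map_pow, eval_constMatrix,
    eval_linearPencil] using h.sum_trace_crossing_le (isSymm_sum_smul h.isSymm x) hpq

end VarianceBounds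

lemma sandwichMoment_two (B : κ → Matrix ι ι ℝ) (m : ℕ) :
    sandwichMoment B 2 m =
      gaussianExpectation (∑ k, ∑ j, (constMatrix (B k) * constMatrix (B j) *
        constMatrix (B j) * constMatrix (B k) * linearPencil B ^ m).trace) +
      ∑ a ∈ Finset.range m, gaussianExpectation (∑ k, ∑ j, (constMatrix (B k) *
        constMatrix (B j) * linearPencil B * constMatrix (B k) * linearPencil B ^ a *
        constMatrix (B j) * linearPencil B ^ (m - 1 - a)).trace) := by
  set Y := linearPencil B
  have hcyclic (k) : (constMatrix (B k) * Y ^ 2 * constMatrix (B k) * Y ^ m).trace =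
      (Y * (Y * constMatrix (B k) * Y ^ m * constMatrix (B k))).trace := by
    simp only [sq, mul_assoc, trace_mul_comm (constMatrix (B k))]
  have hderiv (k j) : (constMatrix (B j) * matrixPDeriv j
      (Y * constMatrix (B k) * Y ^ m * constMatrix (B k))).trace =
      (constMatrix (B k) * constMatrix (B j) * constMatrix (B j) *
        constMatrix (B k) * Y ^ m).trace +
      ∑ a ∈ Finset.range m, (constMatrix (B k) * constMatrix (B j) * Y * constMatrix (B k) *
        Y ^ a * constMatrix (B j) * Y ^ (m - 1 - a)).trace := by
    simp only [Y, matrixPDeriv_mul, matrixPDeriv_constMatrix, matrixPDeriv_linearPencil,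
      matrixPDeriv_linearPencil_pow, mul_zero, add_zero, ← mul_assoc,
      trace_mul_comm _ (constMatrix (B k))]
    simp only [mul_add, trace_add, mul_assoc, Finset.mul_sum, trace_sum]
  simp only [sandwichMoment, hcyclic, map_sum, Y, gaussianExpectation_trace_linearPencil_mul]
  simp only [Y, hderiv, map_add, map_sum, Finset.sum_add_distrib]
  refine congrArg (_ + ·) ?_
  rw [Finset.sum_comm (s := Finset.range m)]
  exact Finset.sum_congr rfl fun k _ ↦ Finset.sum_comm

namespace VarianceBounds

variable {B : κ → Matrix ι ι ℝ} {s w : ℝ}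

lemma sandwichMoment_two_le (h : VarianceBounds B s w) {m : ℕ} (hm : Even m) :
    sandwichMoment B 2 m ≤ (s ^ 2 + 3 * m * (w * s)) * traceMoment B m := by
  have hcrossing : ∀ a ∈ Finset.range m, gaussianExpectation (∑ k, ∑ j, (constMatrix (B k) *
      constMatrix (B j) * linearPencil B * constMatrix (B k) * linearPencil B ^ a *
      constMatrix (B j) * linearPencil B ^ (m - 1 - a)).trace) ≤
      3 * (w * s) * traceMoment B m := by
    intro a ha
    have hdegree : 1 + a + (m - 1 - a) = m := by have := Finset.mem_range.mp ha; omega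
    simpa only [hdegree] using
      h.gaussianExpectation_crossing_le (p := a) (q := m - 1 - a) (by rwa [hdegree])
  calc sandwichMoment B 2 m
      ≤ s ^ 2 * traceMoment B m + m • (3 * (w * s) * traceMoment B m) := by
        rw [sandwichMoment_two]
        gcongr
        · exact h.gaussianExpectation_nested_le hm
        · simpa only [Finset.card_range] using Finset.sum_le_card_nsmul _ _ _ hcrossing
    _ = (s ^ 2 + 3 * m * (w * s)) * traceMoment B m := by rw [nsmul_eq_mul]; ring

lemma sandwichMoment_inner_le (h : VarianceBounds B s w) {m a : ℕ} (hm : Even m) (ha : 2 ≤ a)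
    (ham : a ≤ m) :
    sandwichMoment B a (m + 2 - a) ≤ 2 * ((s ^ 2 + 3 * m * (w * s)) * traceMoment B m) := by
  obtain ⟨p, rfl⟩ := Nat.exists_eq_add_of_le' ha
  obtain ⟨q, rfl⟩ := Nat.exists_eq_add_of_le' ham
  have hexponent : q + (p + 2) + 2 - (p + 2) = q + 2 := by omega
  have hdegree : q + (p + 2) = p + q + 2 := by omega
  rw [hexponent]
  rw [hdegree] at hm ⊢
  have heven : Even (p + q) := by simpa only [Nat.even_add, even_two, iff_true] using hm
  linarith only [h.sandwichMoment_add_two_le heven, h.sandwichMoment_two_le hm]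

-- Of the `m + 3` terms only the four outermost are bounded by the `(m + 2)`-nd moment; for the
-- others `sandwichMoment_two_le` gains the factor `s ^ 2 + m * w * s` over the `m`-th moment.
theorem traceMoment_add_four_le (h : VarianceBounds B s w) {m : ℕ} (hm : Even m) :
    traceMoment B (m + 4) ≤ 8 * s * traceMoment B (m + 2) +
      2 * (m + 3) * ((s ^ 2 + 3 * m * (w * s)) * traceMoment B m) := by
  set Q := (s ^ 2 + 3 * m * (w * s)) * traceMoment B m
  set outer : Finset ℕ := {0, 1, m + 1, m + 2}
  have hs := h.variance_nonneg
  have hw := h.covariance_nonneg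
  have hm₂ : Even (m + 2) := hm.add even_two
  have hmoment₂ : 0 ≤ traceMoment B (m + 2) := traceMoment_nonneg h.isSymm hm₂
  have hQ : 0 ≤ Q := mul_nonneg (by positivity) (traceMoment_nonneg h.isSymm hm)
  have houter : ∀ a ∈ (Finset.range (m + 3)).filter (· ∈ outer),
      sandwichMoment B a (m + 3 - 1 - a) ≤ 2 * s * traceMoment B (m + 2) := by
    intro a ha
    have hdegree : a + (m + 3 - 1 - a) = m + 2 := by
      have := Finset.mem_range.mp (Finset.mem_filter.mp ha).1; omega
    simpa only [hdegree] using
      h.sandwichMoment_le (p := a) (q := m + 3 - 1 - a) (by rwa [hdegree])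
  have hinner : ∀ a ∈ (Finset.range (m + 3)).filter (· ∉ outer),
      sandwichMoment B a (m + 3 - 1 - a) ≤ 2 * Q := by
    intro a ha
    simp only [outer, Finset.mem_filter, Finset.mem_range, Finset.mem_insert,
      Finset.mem_singleton, not_or] at ha
    exact h.sandwichMoment_inner_le hm (by omega) (by omega)
  have hcard_outer : #{a ∈ Finset.range (m + 3) | a ∈ outer} ≤ 4 :=
    (Finset.card_le_card fun a ha ↦ (Finset.mem_filter.mp ha).2).trans Finset.card_le_four
  have hcard_inner : #{a ∈ Finset.range (m + 3) | a ∉ outer} ≤ m + 3 :=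
    (Finset.card_filter_le _ _).trans_eq (Finset.card_range _)
  calc traceMoment B (m + 4)
      ≤ #{a ∈ Finset.range (m + 3) | a ∈ outer} • (2 * s * traceMoment B (m + 2)) +
          #{a ∈ Finset.range (m + 3) | a ∉ outer} • (2 * Q) := by
        rw [traceMoment_succ, ← Finset.sum_filter_add_sum_filter_not _ (· ∈ outer)]
        exact add_le_add (Finset.sum_le_card_nsmul _ _ _ houter)
          (Finset.sum_le_card_nsmul _ _ _ hinner)
    _ ≤ 4 • (2 * s * traceMoment B (m + 2)) + (m + 3) • (2 * Q) := by gcongr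
    _ = 8 * s * traceMoment B (m + 2) + 2 * (m + 3) * Q := by
        simp only [nsmul_eq_mul]; push_cast; ring

theorem traceMoment_two_mul_le (h : VarianceBounds B s w) {K L : ℝ} (hK₂ : 2 * s ≤ K ^ 2)
    (hK₄ : 8 * s * K ^ 2 + 2 * L * (s ^ 2 + 3 * L * (w * s)) ≤ K ^ 4) :
    ∀ p : ℕ, 2 * (p : ℝ) ≤ L → traceMoment B (2 * p) ≤ Fintype.card ι * K ^ (2 * p)
  | 0, _ => by simp [traceMoment_zero]
  | 1, _ => calc
      traceMoment B 2 = sandwichMoment B 0 0 := by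
        rw [traceMoment_succ, Finset.sum_range_one]
      _ ≤ 2 * s * traceMoment B 0 := h.sandwichMoment_le ⟨0, rfl⟩
      _ ≤ K ^ 2 * Fintype.card ι := by rw [traceMoment_zero]; gcongr
      _ = Fintype.card ι * K ^ (2 * 1) := mul_comm _ _
  | p + 2, hp => by
    have hs := h.variance_nonneg
    have hw := h.covariance_nonneg
    push_cast at hp
    have hL : 0 ≤ L := by linarith [p.cast_nonneg (α := ℝ)]
    have hmoment : traceMoment B (2 * p) ≤ Fintype.card ι * K ^ (2 * p) :=
      h.traceMoment_two_mul_le hK₂ hK₄ p (by linarith)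
    have hmoment₂ : traceMoment B (2 * p + 2) ≤ Fintype.card ι * K ^ (2 * p + 2) :=
      h.traceMoment_two_mul_le hK₂ hK₄ (p + 1) (by push_cast; linarith)
    have hmoment_nonneg := traceMoment_nonneg h.isSymm (even_two_mul p)
    calc traceMoment B (2 * p + 4)
        ≤ 8 * s * traceMoment B (2 * p + 2) + 2 * ((2 * p : ℕ) + 3) *
            ((s ^ 2 + 3 * (2 * p : ℕ) * (w * s)) * traceMoment B (2 * p)) :=
          h.traceMoment_add_four_le (even_two_mul p)
      _ ≤ 8 * s * (Fintype.card ι * K ^ (2 * p + 2)) +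
            2 * L * ((s ^ 2 + 3 * L * (w * s)) * (Fintype.card ι * K ^ (2 * p))) := by
          push_cast
          gcongr <;> linarith
      _ = Fintype.card ι * K ^ (2 * p) *
            (8 * s * K ^ 2 + 2 * L * (s ^ 2 + 3 * L * (w * s))) := by ring
      _ ≤ Fintype.card ι * K ^ (2 * p) * K ^ 4 := by
          gcongr
          exact hmoment_nonneg.trans hmoment
      _ = Fintype.card ι * K ^ (2 * p + 4) := by ring

end VarianceBounds

end TraceMoments

section ExpectedNorm

open Matrix

variable {κ ι : Type*} [Fintype ι] [DecidableEq ι]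

theorem opNorm_pow_le_trace_pow [Nonempty ι] {X : Matrix ι ι ℝ} (hX : X.IsSymm) {r : ℕ}
    (hr : Even r) : opNorm X ^ r ≤ (X ^ r).trace := by
  obtain ⟨φ, htrace, -, hnorm, x, hx⟩ := exists_diagonalization hX
  obtain ⟨i, hi⟩ : ∃ i, ‖x‖ ≤ ‖x i‖ := by
    obtain ⟨i, hi⟩ := Finite.exists_max fun i ↦ ‖x i‖
    exact ⟨i, (pi_norm_le_iff_of_nonempty _).mpr hi⟩
  calc opNorm X ^ r = ‖x‖ ^ r := by
        rw [← hnorm, hx]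
        open scoped Matrix.Norms.L2Operator in exact congrArg (· ^ r) (l2_opNorm_diagonal x)
    _ ≤ ‖x i‖ ^ r := by gcongr
    _ = x i ^ r := by rw [Real.norm_eq_abs, hr.pow_abs]
    _ ≤ ∑ j, x j ^ r :=
        Finset.single_le_sum (f := fun j ↦ x j ^ r) (fun j _ ↦ hr.pow_nonneg _)
          (Finset.mem_univ i)
    _ = (X ^ r).trace := by
        rw [← htrace, map_pow, hx, diagonal_pow, trace_diagonal]
        rfl

lemma le_mul_one_add_pow_div_pow {x K : ℝ} (hx : 0 ≤ x) (hK : 0 < K) {r : ℕ} (hr : r ≠ 0) :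
    x ≤ K * (1 + x ^ r / K ^ r) := by
  rw [← div_le_iff₀' hK, ← div_pow]
  rcases le_total (x / K) 1 with hle | hge
  · exact hle.trans (le_add_of_nonneg_right (by positivity))
  · exact (le_self_pow₀ hge hr).trans (le_add_of_nonneg_left zero_le_one)

theorem VarianceBounds.integral_opNorm_le [Fintype κ] [Nonempty ι] {B : κ → Matrix ι ι ℝ}
    {s w K L : ℝ} (h : VarianceBounds B s w) (hK : 0 < K) (hK₂ : 2 * s ≤ K ^ 2)
    (hK₄ : 8 * s * K ^ 2 + 2 * L * (s ^ 2 + 3 * L * (w * s)) ≤ K ^ 4) {p : ℕ} (hp : p ≠ 0)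
    (hpL : 2 * (p : ℝ) ≤ L) (hcard : (Fintype.card ι : ℝ) ≤ 3 ^ (2 * p)) :
    ∫ g, opNorm (∑ k, g k • B k) ∂(Measure.pi fun _ : κ ↦ gaussianReal 0 1) ≤ 6 * K := by
  set μ : Measure (κ → ℝ) := Measure.pi fun _ ↦ gaussianReal 0 1
  have hintegrable : Integrable
      (fun g ↦ MvPolynomial.eval g (linearPencil B ^ (2 * p)).trace) μ :=
    integrable_eval_pi_gaussianReal _
  have hpointwise (g : κ → ℝ) : opNorm (∑ k, g k • B k) ≤ 3 * K *
      (1 + MvPolynomial.eval g (linearPencil B ^ (2 * p)).trace / (3 * K) ^ (2 * p)) := by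
    refine (le_mul_one_add_pow_div_pow (r := 2 * p) (norm_nonneg _) (by positivity : 0 < 3 * K)
      (by omega)).trans ?_
    rw [eval_trace, map_pow, eval_linearPencil]
    gcongr
    exact opNorm_pow_le_trace_pow (isSymm_sum_smul h.isSymm g) (even_two_mul p)
  have hmoment : traceMoment B (2 * p) ≤ (3 * K) ^ (2 * p) := calc
    traceMoment B (2 * p) ≤ Fintype.card ι * K ^ (2 * p) :=
      h.traceMoment_two_mul_le hK₂ hK₄ p hpL
    _ ≤ 3 ^ (2 * p) * K ^ (2 * p) := by gcongr
    _ = (3 * K) ^ (2 * p) := (mul_pow _ _ _).symm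
  calc ∫ g, opNorm (∑ k, g k • B k) ∂μ
      ≤ ∫ g, 3 * K *
          (1 + MvPolynomial.eval g (linearPencil B ^ (2 * p)).trace / (3 * K) ^ (2 * p)) ∂μ :=
        integral_mono_of_nonneg (.of_forall fun _ ↦ norm_nonneg _)
          (((integrable_const _).add (hintegrable.div_const _)).const_mul _)
          (.of_forall hpointwise)
    _ = 3 * K * (1 + traceMoment B (2 * p) / (3 * K) ^ (2 * p)) := by
        rw [integral_const_mul, integral_add (integrable_const _) (hintegrable.div_const _),
          integral_div, integral_const, probReal_univ, one_smul, traceMoment,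
          gaussianExpectation_apply]
    _ ≤ 3 * K * (1 + 1) := by
        gcongr
        exact div_le_one_of_le₀ hmoment (by positivity)
    _ = 6 * K := by ring

end ExpectedNorm

section SubspaceSelection

open Matrix
open scoped RealInnerProductSpace

theorem exists_submodule_inner_le {V : Type*} [NormedAddCommGroup V] [InnerProductSpace ℝ V]
    [FiniteDimensional ℝ V] {T : V →ₗ[ℝ] V} (hT : T.IsPositive) (c : ℝ) :
    ∃ H : Submodule ℝ V,
      c * Module.finrank ℝ V ≤ c * Module.finrank ℝ H + LinearMap.trace ℝ V T ∧
      ∀ y ∈ H, ⟪T y, y⟫ ≤ c * ‖y‖ ^ 2 := by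
  set u := hT.isSymmetric.eigenvectorBasis rfl
  set eigenvalue := hT.isSymmetric.eigenvalues rfl
  have hu (j) : T (u j) = eigenvalue j • u j := hT.isSymmetric.apply_eigenvectorBasis rfl j
  set large : Finset (Fin (Module.finrank ℝ V)) := {j | c < eigenvalue j}
  have htrace : c * large.card ≤ LinearMap.trace ℝ V T := calc
    c * large.card = ∑ _j ∈ large, c := by rw [Finset.sum_const, nsmul_eq_mul, mul_comm]
    _ ≤ ∑ j ∈ large, eigenvalue j :=
      Finset.sum_le_sum fun j hj ↦ (Finset.mem_filter.mp hj).2.le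
    _ ≤ ∑ j, eigenvalue j := Finset.sum_le_univ_sum_of_nonneg (hT.nonneg_eigenvalues rfl)
    _ = LinearMap.trace ℝ V T := (hT.isSymmetric.trace_eq_sum_eigenvalues rfl).symm
  set L := Submodule.span ℝ (Set.range fun j : large ↦ u j)
  have hL : Module.finrank ℝ L = large.card :=
    (finrank_span_eq_card (u.orthonormal.linearIndependent.comp _ Subtype.val_injective)).trans
      (Fintype.card_coe large)
  have hfinrank : (large.card : ℝ) + Module.finrank ℝ Lᗮ = Module.finrank ℝ V := by
    exact_mod_cast hL ▸ L.finrank_add_finrank_orthogonal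
  refine ⟨Lᗮ, by rw [← hfinrank]; linarith, fun y hy ↦ ?_⟩
  have hlarge (j) (hj : j ∈ large) : ⟪u j, y⟫ = 0 :=
    L.mem_orthogonal y |>.mp hy _ (Submodule.subset_span ⟨⟨j, hj⟩, rfl⟩)
  calc ⟪T y, y⟫ = ∑ j, eigenvalue j * ⟪u j, y⟫ ^ 2 := by
        rw [← u.sum_inner_mul_inner]
        refine Finset.sum_congr rfl fun j _ ↦ ?_
        rw [hT.isSymmetric, hu, real_inner_smul_right, real_inner_comm, mul_assoc, sq]
    _ ≤ ∑ j, c * ⟪u j, y⟫ ^ 2 := Finset.sum_le_sum fun j _ ↦ by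
        by_cases hj : c < eigenvalue j
        · simp [hlarge j (Finset.mem_filter_univ j |>.mpr hj)]
        · gcongr
          exact not_lt.mp hj
    _ = c * ‖y‖ ^ 2 := by
        rw [← Finset.mul_sum, ← u.sum_sq_norm_inner_right]
        simp only [Real.norm_eq_abs, sq_abs]

lemma exists_submodule_norm_sq_le {κ V W : Type*} [Fintype κ]
    [NormedAddCommGroup V] [InnerProductSpace ℝ V] [FiniteDimensional ℝ V]
    [NormedAddCommGroup W] [InnerProductSpace ℝ W] [FiniteDimensional ℝ W]
    (Q : V →ₗ[ℝ] W) (b : OrthonormalBasis κ ℝ V) (c : ℝ) :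
    ∃ H : Submodule ℝ V,
      c * Module.finrank ℝ V ≤ c * Module.finrank ℝ H + ∑ i, ‖Q (b i)‖ ^ 2 ∧
      ∀ y ∈ H, ‖Q y‖ ^ 2 ≤ c * ‖y‖ ^ 2 := by
  classical
  have hinner (y : V) : ⟪(Q.adjoint ∘ₗ Q) y, y⟫ = ‖Q y‖ ^ 2 :=
    (Q.adjoint_inner_left y (Q y)).trans (real_inner_self_eq_norm_sq _)
  have htrace : LinearMap.trace ℝ V (Q.adjoint ∘ₗ Q) = ∑ i, ‖Q (b i)‖ ^ 2 := by
    simp only [LinearMap.trace_eq_sum_inner _ b, real_inner_comm _ (b _), hinner]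
  simpa only [htrace, hinner] using
    exists_submodule_inner_le (LinearMap.isPositive_adjoint_comp_self Q) c

variable {κ ι : Type*} [Fintype κ]

/-- The map sending a (fractional) coloring `y` to the matrix `∑ i, y i • A i`. -/
noncomputable def coloredSum (A : κ → Matrix ι ι ℝ) : EuclideanSpace ℝ κ →ₗ[ℝ] Matrix ι ι ℝ where
  toFun y := ∑ i, y i • A i
  map_add' y z := by simp only [PiLp.add_apply, add_smul, Finset.sum_add_distrib]
  map_smul' c y := by
    simp only [PiLp.smul_apply, smul_assoc, ← Finset.smul_sum, RingHom.id_apply]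

lemma coloredSum_apply (A : κ → Matrix ι ι ℝ) (y : EuclideanSpace ℝ κ) :
    coloredSum A y = ∑ i, y i • A i := rfl

lemma coloredSum_single [DecidableEq κ] (A : κ → Matrix ι ι ℝ) (i : κ) :
    coloredSum A (EuclideanSpace.single i 1) = A i := by
  simp [coloredSum_apply]

variable [Fintype ι]

lemma exists_submodule_frobNormSq_le (A : κ → Matrix ι ι ℝ) (c : ℝ) :
    ∃ H : Submodule ℝ (EuclideanSpace ℝ κ),
      c * Fintype.card κ ≤ c * Module.finrank ℝ H + ∑ i, frobNormSq (A i) ∧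
      ∀ y ∈ H, frobNormSq (coloredSum A y) ≤ c * ‖y‖ ^ 2 := by
  classical
  let flatten : Matrix ι ι ℝ ≃ₗ[ℝ] EuclideanSpace ℝ (ι × ι) :=
    (LinearEquiv.curry ℝ ℝ ι ι).symm ≪≫ₗ (WithLp.linearEquiv 2 ℝ (ι × ι → ℝ)).symm
  have hflatten (M : Matrix ι ι ℝ) : ‖flatten M‖ ^ 2 = frobNormSq M := by
    rw [EuclideanSpace.real_norm_sq_eq, Fintype.sum_prod_type]
    rfl
  simpa only [LinearMap.comp_apply, LinearEquiv.coe_coe, hflatten, finrank_euclideanSpace,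
    EuclideanSpace.basisFun_apply, coloredSum_single] using
    exists_submodule_norm_sq_le (flatten.toLinearMap ∘ₗ coloredSum A)
      (EuclideanSpace.basisFun κ ℝ) c

variable [DecidableEq κ]

theorem exists_le_coordSubspace_frobNormSq_le {A : κ → Matrix ι ι ℝ} {D : ℝ} (hD : 0 < D)
    (hA : ∀ i, frobNormSq (A i) ≤ D) (S : Finset κ) :
    ∃ H ≤ coordSubspace S, 9 * S.card ≤ 10 * Module.finrank ℝ H ∧
      ∀ y ∈ H, frobNormSq (coloredSum A y) ≤ 10 * D * ‖y‖ ^ 2 := by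
  obtain ⟨H, hdim, hH⟩ := exists_submodule_frobNormSq_le ((S : Set κ).indicator A) (10 * D)
  have hsum : ∑ i, frobNormSq ((S : Set κ).indicator A i) ≤ S.card * D := by
    rw [← nsmul_eq_mul, ← Finset.sum_const]
    refine (Finset.sum_subset S.subset_univ fun i _ hi ↦ ?_).symm.trans_le
      (Finset.sum_le_sum fun i hi ↦ ?_)
    · simp [Set.indicator_of_notMem (Finset.mem_coe.not.mpr hi), frobNormSq]
    · rw [Set.indicator_of_mem (Finset.mem_coe.mpr hi)]
      exact hA i
  have hrestrict : ∀ y ∈ coordSubspace S,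
      coloredSum ((S : Set κ).indicator A) y = coloredSum A y := by
    intro y hy
    refine Finset.sum_congr rfl fun i _ ↦ ?_
    by_cases hi : i ∈ S
    · rw [Set.indicator_of_mem (Finset.mem_coe.mpr hi)]
    · rw [apply_eq_zero_of_mem_coordSubspace hy hi, zero_smul, zero_smul]
  have hdim' : 10 * Fintype.card κ ≤ 10 * Module.finrank ℝ H + S.card := by
    have : (10 * Fintype.card κ : ℝ) * D ≤ (10 * Module.finrank ℝ H + S.card : ℝ) * D := by
      linarith
    exact_mod_cast le_of_mul_le_mul_right this hD
  have hinf := finrank_add_le_finrank_inf_add (le_top : H ≤ ⊤) (le_top : coordSubspace S ≤ ⊤)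
  rw [finrank_coordSubspace, finrank_top, finrank_euclideanSpace] at hinf
  refine ⟨H ⊓ coordSubspace S, inf_le_right, by omega, fun y hy ↦ ?_⟩
  rw [← hrestrict y hy.2]
  exact hH y hy.1

end SubspaceSelection

section ProjectedVariance

open Matrix
open scoped RealInnerProductSpace

lemma frobNormSq_eq_sum_norm_col_sq {m n : Type*} [Fintype m] [Fintype n] (M : Matrix m n ℝ) :
    frobNormSq M = ∑ j, ‖WithLp.toLp 2 (M.col j)‖ ^ 2 := by
  simp only [frobNormSq, EuclideanSpace.real_norm_sq_eq]
  exact Finset.sum_comm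

lemma frobNormSq_mul_le {m n l : Type*} [Fintype m] [Fintype n] [Fintype l] [DecidableEq n]
    (A : Matrix m n ℝ) (M : Matrix n l ℝ) : frobNormSq (A * M) ≤ opNorm A ^ 2 * frobNormSq M := by
  rw [frobNormSq_eq_sum_norm_col_sq, frobNormSq_eq_sum_norm_col_sq, Finset.mul_sum]
  refine Finset.sum_le_sum fun j _ ↦ ?_
  rw [← mul_pow]
  gcongr
  exact (LinearMap.toContinuousLinearMap (Matrix.toEuclideanLin A)).le_opNorm
    (WithLp.toLp 2 (M.col j))

lemma frobNormSq_mul_le_of_opNorm_le_one {m n l : Type*} [Fintype m] [Fintype n] [Fintype l]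
    [DecidableEq n] {A : Matrix m n ℝ} (hA : opNorm A ≤ 1) (M : Matrix n l ℝ) :
    frobNormSq (A * M) ≤ frobNormSq M :=
  (frobNormSq_mul_le A M).trans <|
    mul_le_of_le_one_left (frobNormSq_nonneg M) (pow_le_one₀ (norm_nonneg _) hA)

lemma frobNormSq_le_card {m n : Type*} [Fintype m] [Fintype n] [DecidableEq n]
    {A : Matrix m n ℝ} (hA : opNorm A ≤ 1) : frobNormSq A ≤ Fintype.card n := calc
  frobNormSq A = frobNormSq (A * 1) := by rw [Matrix.mul_one]
  _ ≤ frobNormSq (1 : Matrix n n ℝ) := frobNormSq_mul_le_of_opNorm_le_one hA 1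
  _ = Fintype.card n := by
    rw [frobNormSq_eq_trace, transpose_one, one_mul, trace_one]

lemma trace_transpose_mul_sq_le {m n : Type*} [Fintype m] [Fintype n] (M N : Matrix m n ℝ) :
    (Mᵀ * N).trace ^ 2 ≤ frobNormSq M * frobNormSq N := by
  simp only [frobNormSq, Matrix.trace, diag_apply, mul_apply, transpose_apply]
  rw [Finset.sum_comm]
  simp only [← Fintype.sum_prod_type']
  exact Finset.sum_mul_sq_le_sq_mul_sq _ _ _

variable {κ ι : Type*} [Fintype κ] [DecidableEq κ] {S : Finset κ}
  {H : Submodule ℝ (EuclideanSpace ℝ κ)}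

lemma norm_starProjection_sq_le_sum (hHS : H ≤ coordSubspace S) (a : EuclideanSpace ℝ κ) :
    ‖H.starProjection a‖ ^ 2 ≤ ∑ j ∈ S, a j ^ 2 := by
  set b : EuclideanSpace ℝ κ := WithLp.toLp 2 ((S : Set κ).indicator a)
  have hmask : H.starProjection a = H.starProjection b := by
    rw [← sub_eq_zero, ← map_sub, Submodule.starProjection_apply_eq_zero_iff]
    intro y hy
    refine Finset.sum_eq_zero fun j _ ↦ ?_
    by_cases hj : j ∈ S
    · simp [b, hj]
    · simp [apply_eq_zero_of_mem_coordSubspace (hHS hy) hj]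
  calc ‖H.starProjection a‖ ^ 2 ≤ ‖b‖ ^ 2 := by
        rw [hmask]
        gcongr
        exact H.norm_starProjection_apply_le b
    _ = ∑ j ∈ S, a j ^ 2 := by
        simp [EuclideanSpace.real_norm_sq_eq, b, Set.indicator_apply, Finset.sum_ite_mem]

lemma sum_inner_starProjection_single_sq (H : Submodule ℝ (EuclideanSpace ℝ κ))
    (a : EuclideanSpace ℝ κ) :
    ∑ i, ⟪H.starProjection (EuclideanSpace.single i 1), a⟫ ^ 2 = ‖H.starProjection a‖ ^ 2 := by
  simp only [H.inner_starProjection_left_eq_right, EuclideanSpace.inner_single_left, map_one,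
    one_mul, EuclideanSpace.real_norm_sq_eq]

variable [Fintype ι] {A : κ → Matrix ι ι ℝ}

lemma sum_frobNormSq_coloredSum_starProjection_mul_le [DecidableEq ι]
    (hnorm : ∀ i, opNorm (A i) ≤ 1) (hHS : H ≤ coordSubspace S) (M : Matrix ι ι ℝ) :
    ∑ i, frobNormSq (coloredSum A (H.starProjection (EuclideanSpace.single i 1)) * M) ≤
      S.card * frobNormSq M := by
  have hentry (y : EuclideanSpace ℝ κ) (a b : ι) :
      (coloredSum A y * M) a b = ⟪y, WithLp.toLp 2 fun j ↦ (A j * M) a b⟫ := by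
    simp [coloredSum_apply, Finset.sum_mul, Matrix.sum_apply, PiLp.inner_apply, mul_comm]
  calc ∑ i, frobNormSq (coloredSum A (H.starProjection (EuclideanSpace.single i 1)) * M)
      = ∑ a, ∑ b, ‖H.starProjection (WithLp.toLp 2 fun j ↦ (A j * M) a b)‖ ^ 2 := by
        simp only [frobNormSq, hentry, ← sum_inner_starProjection_single_sq]
        rw [Finset.sum_comm]
        exact Finset.sum_congr rfl fun a _ ↦ Finset.sum_comm
    _ ≤ ∑ a, ∑ b, ∑ j ∈ S, (A j * M) a b ^ 2 := by
        gcongr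
        exact norm_starProjection_sq_le_sum hHS _
    _ = ∑ j ∈ S, frobNormSq (A j * M) := by
        simp only [frobNormSq, Finset.sum_comm (s := S)]
    _ ≤ ∑ _j ∈ S, frobNormSq M :=
        Finset.sum_le_sum fun j _ ↦ frobNormSq_mul_le_of_opNorm_le_one (hnorm j) M
    _ = S.card * frobNormSq M := by rw [Finset.sum_const, nsmul_eq_mul]

lemma sum_trace_coloredSum_starProjection_sq_le {w : ℝ} (hw : 0 ≤ w)
    (hH : ∀ y ∈ H, frobNormSq (coloredSum A y) ≤ w * ‖y‖ ^ 2) (M : Matrix ι ι ℝ) :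
    ∑ i, (Mᵀ * coloredSum A (H.starProjection (EuclideanSpace.single i 1))).trace ^ 2 ≤
      w * frobNormSq M := by
  set a : EuclideanSpace ℝ κ := WithLp.toLp 2 fun j ↦ (Mᵀ * A j).trace
  have htrace (y : EuclideanSpace ℝ κ) : (Mᵀ * coloredSum A y).trace = ⟪y, a⟫ := by
    simp [coloredSum_apply, Matrix.mul_sum, trace_sum, PiLp.inner_apply, a, mul_comm]
  simp only [htrace, sum_inner_starProjection_single_sq]
  have hmem : H.starProjection a ∈ H := H.starProjection_apply_mem a
  have hself : (Mᵀ * coloredSum A (H.starProjection a)).trace = ‖H.starProjection a‖ ^ 2 := by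
    rw [htrace, ← real_inner_self_eq_norm_sq, ← H.inner_starProjection_left_eq_right,
      H.starProjection_eq_self_iff.mpr hmem]
  have hcauchy : (‖H.starProjection a‖ ^ 2) ^ 2 ≤ w * frobNormSq M * ‖H.starProjection a‖ ^ 2 :=
    calc (‖H.starProjection a‖ ^ 2) ^ 2
      ≤ frobNormSq M * frobNormSq (coloredSum A (H.starProjection a)) :=
        hself ▸ trace_transpose_mul_sq_le _ _
    _ ≤ frobNormSq M * (w * ‖H.starProjection a‖ ^ 2) :=
        mul_le_mul_of_nonneg_left (hH _ hmem) (frobNormSq_nonneg M)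
    _ = w * frobNormSq M * ‖H.starProjection a‖ ^ 2 := by ring
  rcases (sq_nonneg ‖H.starProjection a‖).eq_or_lt with hzero | hpos
  · rw [← hzero]
    exact mul_nonneg hw (frobNormSq_nonneg M)
  · exact le_of_mul_le_mul_right ((sq _).symm.trans_le hcauchy) hpos

theorem varianceBounds_coloredSum_starProjection [DecidableEq ι] {w : ℝ} (hw : 0 ≤ w)
    (hsymm : ∀ i, (A i).IsSymm) (hnorm : ∀ i, opNorm (A i) ≤ 1) (hHS : H ≤ coordSubspace S)
    (hH : ∀ y ∈ H, frobNormSq (coloredSum A y) ≤ w * ‖y‖ ^ 2) :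
    VarianceBounds (fun i ↦ coloredSum A (H.starProjection (EuclideanSpace.single i 1)))
      S.card w where
  isSymm _ := isSymm_sum_smul hsymm _
  variance_nonneg := Nat.cast_nonneg _
  covariance_nonneg := hw
  sum_frobNormSq_mul_le := sum_frobNormSq_coloredSum_starProjection_mul_le hnorm hHS
  sum_trace_sq_le := sum_trace_coloredSum_starProjection_sq_le hw hH

end ProjectedVariance

section Assembly

variable {κ ι : Type*} [Fintype κ] [Fintype ι] [DecidableEq ι]

/-- `coloredSum A` with values in operators on Euclidean space, so that its target carries the
operator norm. -/
noncomputable def coloredOperator (A : κ → Matrix ι ι ℝ) :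
    EuclideanSpace ℝ κ →L[ℝ] EuclideanSpace ℝ ι →L[ℝ] EuclideanSpace ℝ ι :=
  LinearMap.toContinuousLinearMap
    ((Matrix.toEuclideanLin ≪≫ₗ LinearMap.toContinuousLinearMap).toLinearMap ∘ₗ coloredSum A)

lemma norm_coloredOperator (A : κ → Matrix ι ι ℝ) (y : EuclideanSpace ℝ κ) :
    ‖coloredOperator A y‖ = opNorm (coloredSum A y) := rfl

lemma smoothedNorm_coloredOperator_zero [DecidableEq κ] (A : κ → Matrix ι ι ℝ)
    (H : Submodule ℝ (EuclideanSpace ℝ κ)) :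
    smoothedNorm (coloredOperator A ∘L H.starProjection) 0 =
      ∫ g, opNorm (∑ k, g k • coloredSum A (H.starProjection (EuclideanSpace.single k 1)))
        ∂(Measure.pi fun _ : κ ↦ gaussianReal 0 1) := by
  rw [smoothedNorm, ← map_pi_eq_stdGaussian, integral_map (by fun_prop) (by fun_prop)]
  refine integral_congr_ae (.of_forall fun g ↦ ?_)
  have hsum : (WithLp.toLp 2 g : EuclideanSpace ℝ κ) =
      ∑ k, g k • EuclideanSpace.single k (1 : ℝ) := by
    ext j
    simp [Pi.single_apply]
  simp only [zero_add, ContinuousLinearMap.comp_apply, norm_coloredOperator]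
  simp only [hsum, map_sum, map_smul]

/-- The discrepancy scale `l ^ (1 / 4) √m + l ^ (1 / 2) (m D) ^ (1 / 4)` of `m` matrices whose
squared Frobenius norms are at most `D`, where `l` is the logarithm of the dimension. -/
noncomputable def discrepancyScale (l D m : ℝ) : ℝ :=
  l ^ ((1 : ℝ) / 4) * √m + l ^ ((1 : ℝ) / 2) * (m * D) ^ ((1 : ℝ) / 4)

lemma discrepancyScale_pos {l D m : ℝ} (hl : 0 < l) (hD : 0 ≤ D) (hm : 0 < m) :
    0 < discrepancyScale l D m := by
  unfold discrepancyScale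
  positivity

lemma rpow_one_div_four_pow_four {x : ℝ} (hx : 0 ≤ x) : (x ^ ((1 : ℝ) / 4)) ^ 4 = x := by
  simpa using Real.rpow_inv_natCast_pow hx four_ne_zero

lemma discrepancyScale_half_le {l D m m' : ℝ} (hl : 0 ≤ l) (hD : 0 ≤ D) (hm' : 0 ≤ m')
    (h : 2 * m' ≤ m) : discrepancyScale l D m' ≤ 17 / 20 * discrepancyScale l D m := by
  have hm : 0 ≤ m := by linarith
  have hsqrt : √m' ≤ 17 / 20 * √m := by
    rw [Real.sqrt_le_left (by positivity), mul_pow, Real.sq_sqrt hm]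
    linarith
  have hrpow : (m' * D) ^ ((1 : ℝ) / 4) ≤ 17 / 20 * (m * D) ^ ((1 : ℝ) / 4) := by
    refine le_of_pow_le_pow_left₀ four_ne_zero (by positivity) ?_
    rw [mul_pow, rpow_one_div_four_pow_four (by positivity),
      rpow_one_div_four_pow_four (by positivity)]
    nlinarith
  calc discrepancyScale l D m'
      ≤ l ^ ((1 : ℝ) / 4) * (17 / 20 * √m) +
        l ^ ((1 : ℝ) / 2) * (17 / 20 * (m * D) ^ ((1 : ℝ) / 4)) := by
        unfold discrepancyScale
        gcongr
    _ = 17 / 20 * discrepancyScale l D m := by rw [discrepancyScale]; ring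

lemma le_discrepancyScale_pow {l D m : ℝ} (hl : 0.69 ≤ l) (hD : 0 ≤ D) (hm : 0 ≤ m) :
    4 / 5 * m ≤ discrepancyScale l D m ^ 2 ∧
      l * m ^ 2 + l ^ 2 * (m * D) ≤ discrepancyScale l D m ^ 4 := by
  have hl₀ : 0 ≤ l := by linarith
  set u := l ^ ((1 : ℝ) / 4) * √m with hu
  set v := l ^ ((1 : ℝ) / 2) * (m * D) ^ ((1 : ℝ) / 4) with hv
  have hu₀ : 0 ≤ u := by positivity
  have hv₀ : 0 ≤ v := by positivity
  have hu₄ : u ^ 4 = l * m ^ 2 := by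
    rw [hu, mul_pow, rpow_one_div_four_pow_four hl₀, pow_mul √m 2 2, Real.sq_sqrt hm]
  have hv₄ : v ^ 4 = l ^ 2 * (m * D) := by
    rw [hv, mul_pow, rpow_one_div_four_pow_four (by positivity), ← Real.sqrt_eq_rpow,
      pow_mul √l 2 2, Real.sq_sqrt hl₀]
  have hu₂ : 4 / 5 * m ≤ u ^ 2 := by
    refine le_of_pow_le_pow_left₀ two_ne_zero (by positivity) ?_
    rw [← pow_mul, hu₄]
    nlinarith [sq_nonneg m]
  constructor
  · exact hu₂.trans (by unfold discrepancyScale; gcongr; exact le_add_of_nonneg_right hv₀)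
  · rw [← hu₄, ← hv₄]
    exact pow_add_pow_le hu₀ hv₀ four_ne_zero

lemma le_log_of_two_le {N : ℕ} (hN : 2 ≤ N) : 0.69 ≤ Real.log N := calc
  0.69 ≤ Real.log 2 := by linarith [Real.log_two_gt_d9]
  _ ≤ Real.log N := Real.log_le_log two_pos (by exact_mod_cast hN)

lemma exists_moment_exponent {N : ℕ} (hN : 2 ≤ N) :
    ∃ p : ℕ, p ≠ 0 ∧ 2 * (p : ℝ) ≤ 8 * Real.log N ∧ (N : ℝ) ≤ 3 ^ (2 * p) := by
  have hlog : 0.69 ≤ Real.log N := le_log_of_two_le hN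
  refine ⟨⌈Real.log N⌉₊, (Nat.ceil_pos.mpr (by linarith)).ne', ?_, ?_⟩
  · linarith [Nat.ceil_lt_add_one (by linarith : 0 ≤ Real.log N)]
  · calc (N : ℝ) = Real.exp (Real.log N) := (Real.exp_log (by positivity)).symm
      _ ≤ Real.exp ⌈Real.log N⌉₊ := Real.exp_le_exp.mpr (Nat.le_ceil _)
      _ = Real.exp 1 ^ ⌈Real.log N⌉₊ := by rw [← Real.exp_nat_mul, mul_one]
      _ ≤ 3 ^ ⌈Real.log N⌉₊ := by
        gcongr
        exact Real.exp_one_lt_three.le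
      _ ≤ 3 ^ (2 * ⌈Real.log N⌉₊) := pow_le_pow_right₀ (by norm_num) (by omega)

theorem VarianceBounds.integral_opNorm_le_discrepancyScale {B : κ → Matrix ι ι ℝ} {m D : ℝ}
    (h : VarianceBounds B m (10 * D)) (hcard : 2 ≤ Fintype.card ι) (hm : 0 < m) (hD : 0 ≤ D) :
    ∫ g, opNorm (∑ k, g k • B k) ∂(Measure.pi fun _ : κ ↦ gaussianReal 0 1) ≤
      60 * discrepancyScale (Real.log (Fintype.card ι)) D m := by
  set l := Real.log (Fintype.card ι)
  have hl : 0.69 ≤ l := le_log_of_two_le hcard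
  set r := discrepancyScale l D m
  have hr₀ : 0 < r := discrepancyScale_pos (by linarith) hD hm
  obtain ⟨hr₂, hr₄⟩ := le_discrepancyScale_pow hl hD hm.le
  obtain ⟨p, hp, hpL, hcard_le⟩ := exists_moment_exponent hcard
  have : Nonempty ι := Fintype.card_pos_iff.mp (by omega)
  have hmul := mul_le_mul_of_nonneg_right hr₂ (sq_nonneg r)
  have hvariance : 8 * m * (10 * r) ^ 2 + 2 * (8 * l) * (m ^ 2 + 3 * (8 * l) * (10 * D * m)) ≤
      (10 * r) ^ 4 := by
    nlinarith
  calc _ ≤ 6 * (10 * r) :=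
        h.integral_opNorm_le (by positivity) (by linarith) hvariance hp hpL hcard_le
    _ = 60 * r := by ring

theorem discrepancy_beats_random_coloring_general {A : κ → Matrix ι ι ℝ} {D : ℝ}
    (hcard : 2 ≤ Fintype.card ι) (hsymm : ∀ i, (A i).IsSymm) (hnorm : ∀ i, opNorm (A i) ≤ 1)
    (hD : 0 < D) (hfrob : ∀ i, frobNormSq (A i) ≤ D) :
    ∃ x : κ → ℝ, (∀ i, x i = 1 ∨ x i = -1) ∧ opNorm (∑ i, x i • A i) ≤
      1200 * discrepancyScale (Real.log (Fintype.card ι)) D (Fintype.card κ) := by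
  classical
  set l := Real.log (Fintype.card ι)
  have hl : 0.69 ≤ l := le_log_of_two_le hcard
  have hpos (m : ℝ) (hm : 0 < m) : 0 < discrepancyScale l D m :=
    discrepancyScale_pos (by linarith) hD.le hm
  have hsubspace (S : Finset κ) (hS : S.Nonempty) : ∃ H ≤ coordSubspace S,
      9 * S.card ≤ 10 * Module.finrank ℝ H ∧
        smoothedNorm (coloredOperator A ∘L H.starProjection) 0 ≤
          60 * discrepancyScale l D S.card := by
    obtain ⟨H, hHS, hdim, hH⟩ := exists_le_coordSubspace_frobNormSq_le hD hfrob S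
    have hvariance := varianceBounds_coloredSum_starProjection (by positivity) hsymm hnorm hHS hH
    refine ⟨H, hHS, hdim, ?_⟩
    rw [smoothedNorm_coloredOperator_zero]
    exact hvariance.integral_opNorm_le_discrepancyScale hcard (by exact_mod_cast hS.card_pos) hD.le
  obtain ⟨x, hx, hxT⟩ := exists_full_coloring (coloredOperator A)
    (R := fun m ↦ 60 * discrepancyScale l D m) (ρ := 17 / 20) (by norm_num)
    (by unfold discrepancyScale; positivity)
    (fun m hm ↦ mul_pos (by norm_num) (hpos m (by exact_mod_cast hm)))
    (fun m m' h ↦ by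
      have hscale := discrepancyScale_half_le (l := l) (by linarith) hD.le m'.cast_nonneg
        (by exact_mod_cast h : 2 * (m' : ℝ) ≤ m)
      linarith)
    hsubspace Finset.univ 0 (by simp) (by simp)
  refine ⟨x, fun i ↦ eq_or_eq_neg_of_abs_eq (hx i), ?_⟩
  calc opNorm (∑ i, x i • A i) = ‖coloredOperator A x‖ := (norm_coloredOperator A x).symm
    _ ≤ 1200 * discrepancyScale l D (Fintype.card κ) := by
      rw [map_zero, norm_zero, zero_add, Finset.card_univ] at hxT
      linarith

end Assembly

/-- **Improvement over the random-coloring bound (Section 1.1).** There is a universal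
constant `C > 0` such that for all `n ≥ 2`, `d ≥ 2`, and symmetric matrices
`A 1, …, A n ∈ ℝ^{d×d}` with `‖A i‖_op ≤ 1`, there exist signs `x ∈ {±1}ⁿ` with
`‖∑ x i • A i‖_op ≤ C ((log d)^{1/4} √n + (log d)^{1/2} (n d)^{1/4})`; in particular the
discrepancy is `o(√(n log d))` whenever `d = o(n)`. -/
theorem discrepancy_beats_random_coloring :
    ∃ C : ℝ, 0 < C ∧ ∀ (n d : ℕ), 2 ≤ n → 2 ≤ d →
      ∀ A : Fin n → Matrix (Fin d) (Fin d) ℝ,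
        (∀ i, (A i).IsSymm) → (∀ i, opNorm (A i) ≤ 1) →
        ∃ x : Fin n → ℝ, (∀ i, x i = 1 ∨ x i = -1) ∧
          opNorm (∑ i, x i • A i) ≤
            C * ((Real.log d) ^ ((1 : ℝ) / 4) * Real.sqrt n +
              (Real.log d) ^ ((1 : ℝ) / 2) * ((n : ℝ) * d) ^ ((1 : ℝ) / 4)) := by
  refine ⟨1200, by norm_num, fun n d _ hd A hsymm hnorm ↦ ?_⟩
  have hfrob (i : Fin n) : frobNormSq (A i) ≤ d := by
    simpa using frobNormSq_le_card (hnorm i)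
  simpa only [Fintype.card_fin, discrepancyScale] using
    discrepancy_beats_random_coloring_general (by simpa using hd) hsymm hnorm
      (by positivity) hfrob
end
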